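/- arXiv:1602.06031 — 4 statements merged into one kernel-verified Lean document; each statement's English description precedes it below -/
import Mathlib

section
/- Let n ≥ 3, k an integer with 1 < k < n/2, and p > nk/(n-2k). Let u be a regular solution of the initial value problem -(1/k)·C(n-1,k-1)·(r^{n-k}|u'|^{k-1}u')' = r^{n-1}u^p, u > 0, u'(0) = 0, u(0) = ρ > 0. If u(r) = o(r^{-2k/(p-k)}) as r → ∞, then u(r) = O(r^{(2k-n)/k}) as r → ∞. -/
open MeasureTheory Real Set Filter Asymptotics

noncomputable section

namespace KHessianPaper

/-- The binomial coefficient `C(n-1, k-1)` as a real number. -/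
def binomC (n k : ℕ) : ℝ := ((n - 1).choose (k - 1) : ℝ)

/-- The flux `w(r) = r^{n-k} |u'(r)|^{k-1} u'(r)`. -/
def flux (n k : ℕ) (u : ℝ → ℝ) (r : ℝ) : ℝ :=
  r ^ (n - k) * |deriv u r| ^ (k - 1) * deriv u r

/-- `u` is a regular solution of the radial `k`-Hessian initial value problem
`-(1/k) C(n-1,k-1) (r^{n-k} |u'|^{k-1} u')' = r^{n-1} u^p`, `u > 0`, `u'(0) = 0`, `u(0) = ρ`. -/
structure IsRegularSolution (n k : ℕ) (p ρ : ℝ) (u : ℝ → ℝ) : Prop where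
  contDiffOn : ContDiffOn ℝ 1 u (Ici 0)
  deriv_zero : derivWithin u (Ici 0) 0 = 0
  init : u 0 = ρ
  pos : ∀ r : ℝ, 0 ≤ r → 0 < u r
  eqn : ∀ r : ℝ, 0 < r →
    HasDerivAt (flux n k u) (-((k : ℝ) / binomC n k) * r ^ (n - 1) * u r ^ p) r
  radial_smooth : ContDiff ℝ 2 (fun x : EuclideanSpace ℝ (Fin n) => -u ‖x‖)

/-- `φ : [0,∞) → ℝ` is the radial profile of a smooth compactly supported function on `ℝⁿ`. -/
def MemWStar (n : ℕ) (φ : ℝ → ℝ) : Prop :=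
  ∃ Φ : EuclideanSpace ℝ (Fin n) → ℝ,
    ContDiff ℝ (⊤ : ℕ∞) Φ ∧ HasCompactSupport Φ ∧ ∀ x, Φ x = φ ‖x‖

/-- The weak form of the equation tested against `φ`. -/
def WeakEqn (n k : ℕ) (p : ℝ) (u φ : ℝ → ℝ) : Prop :=
  ∫ r in Ioi (0 : ℝ),
      ((1 / (k : ℝ)) * binomC n k * r ^ (n - k) * |deriv u r| ^ (k - 1) * deriv u r
          * deriv φ r
        - r ^ (n - 1) * u r ^ p * φ r) = 0

/-- The second-variation quadratic form `Q_u(φ)`. -/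
def Qform (n k : ℕ) (p : ℝ) (u φ : ℝ → ℝ) : ℝ :=
  binomC n k * ∫ r in Ioi (0 : ℝ), r ^ (n - k) * |deriv u r| ^ (k - 1) * (deriv φ r) ^ 2
    - p * ∫ r in Ioi (0 : ℝ), r ^ (n - 1) * u r ^ (p - 1) * (φ r) ^ 2

/-- `u` is a positive stable solution of the radial `k`-Hessian equation. -/
def IsStableSolution (n k : ℕ) (p : ℝ) (u : ℝ → ℝ) : Prop :=
  (∀ r : ℝ, 0 < r → 0 < u r) ∧ ContDiffOn ℝ 1 u (Ioi 0) ∧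
  (∀ φ, MemWStar n φ → WeakEqn n k p u φ) ∧
  (∀ φ, MemWStar n φ → 0 ≤ Qform n k p u φ)

/-- `u` is a positive stable solution on `(R,∞)` of the radial `k`-Hessian equation. -/
def IsStableSolutionOn (n k : ℕ) (p : ℝ) (R : ℝ) (u : ℝ → ℝ) : Prop :=
  (∀ r : ℝ, 0 < r → 0 < u r) ∧ ContDiffOn ℝ 1 u (Ioi 0) ∧
  (∀ φ, MemWStar n φ → WeakEqn n k p u φ) ∧
  (∀ φ : ℝ → ℝ, ContDiff ℝ (⊤ : ℕ∞) φ → HasCompactSupport φ → tsupport φ ⊆ Ioi R →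
    0 ≤ Qform n k p u φ)

/-- The constant `A` in the singular solution `u_s(r) = A r^{-2k/(p-k)}`. -/
def Aconst (n k : ℕ) (p : ℝ) : ℝ :=
  ((1 / (k : ℝ)) * binomC n k) ^ (1 / (p - k))
    * (2 * (k : ℝ) / (p - (k : ℝ))) ^ ((k : ℝ) / (p - k))
    * ((n : ℝ) - 2 * p * k / (p - k)) ^ (1 / (p - k))

/-- The singular solution `u_s(r) = A r^{-2k/(p-k)}`. -/
def uSing (n k : ℕ) (p : ℝ) (r : ℝ) : ℝ := Aconst n k p * r ^ (-(2 * (k : ℝ) / (p - k)))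

/-- The Joseph–Lundgren exponent (finite form, relevant when `n > 2k+8`). -/
def pJL (n k : ℕ) : ℝ :=
  ((k : ℝ) * ((n : ℝ) ^ 2 - 2 * ((k : ℝ) + 3) * (n : ℝ) + 4 * (k : ℝ))
      + 4 * (k : ℝ) * Real.sqrt (2 * ((k : ℝ) + 1) * (n : ℝ) - 4 * (k : ℝ)))
    / (((n : ℝ) - 2 * (k : ℝ)) * ((n : ℝ) - 2 * (k : ℝ) - 8))

/-- The exponent `p* = k(n+2k)/(n-2k)`. -/
def pStar (n k : ℕ) : ℝ := (k : ℝ) * ((n : ℝ) + 2 * (k : ℝ)) / ((n : ℝ) - 2 * (k : ℝ))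

/-- Abstract form of the first-order system satisfied by a decreasing positive solution. -/
structure Sys (d k : ℕ) (p c : ℝ) (u v W : ℝ → ℝ) : Prop where
  hk : 0 < k
  hd : 0 < d
  hc : 0 < c
  hp : (k : ℝ) < p
  upos : ∀ r, 0 < r → 0 < u r
  vpos : ∀ r, 0 < r → 0 < v r
  du : ∀ r, 0 < r → HasDerivAt u (-v r) r
  hW : ∀ r, 0 < r → W r = r ^ (k + d) * v r ^ k
  dW : ∀ r, 0 < r → HasDerivAt W (c * r ^ (2 * k + d - 1) * u r ^ p) r

namespace Sys

variable {d k : ℕ} {p c : ℝ} {u v W : ℝ → ℝ}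

/-- Multiplying `u` by a power. -/
lemma d_umul (h : Sys d k p c u v W) (m r : ℝ) (hr : 0 < r) :
    HasDerivAt (fun r => u r * r ^ m) (r ^ m * (m * u r / r - v r)) r := by
  have h1 := (h.du r hr).mul (Real.hasDerivAt_rpow_const (p := m) (Or.inl hr.ne'))
  refine h1.congr_deriv ?_
  rw [Real.rpow_sub_one hr.ne']
  field_simp
  ring

lemma Y_eq (h : Sys d k p c u v W) (r : ℝ) (hr : 0 < r) :
    W r / (r ^ d * u r ^ k) = (r * v r / u r) ^ k := by
  have := h.upos r hr
  rw [h.hW r hr, div_pow, mul_pow, pow_add]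
  field_simp

lemma Y_deriv (h : Sys d k p c u v W) (r : ℝ) (hr : 0 < r) :
    HasDerivAt (fun r => W r / (r ^ d * u r ^ k))
      ((c * (r ^ (2 * k) * u r ^ (p - k)) -
        W r / (r ^ d * u r ^ k) * (d - k * (r * v r / u r))) / r) r := by
  have hu0 := h.upos r hr
  obtain ⟨e, rfl⟩ : ∃ e, d = e + 1 := ⟨d - 1, by have := h.hd; omega⟩
  obtain ⟨j, rfl⟩ : ∃ e, k = e + 1 := ⟨k - 1, by have := h.hk; omega⟩
  have h1 := (h.dW r hr).div (((hasDerivAt_id r).pow (e + 1)).mul ((h.du r hr).pow (j + 1)))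
    (by simp only [Pi.mul_apply, Pi.pow_apply, id]; positivity)
  refine h1.congr_deriv ?_
  have e1 : u r ^ p = u r ^ (p - ((j + 1 : ℕ) : ℝ)) * u r ^ (j + 1) := by
    rw [← Real.rpow_natCast (u r) (j + 1), ← Real.rpow_add hu0]; congr 1; ring
  rw [e1]
  have e2 : 2 * (j + 1) + (e + 1) - 1 = 2 * (j + 1) + e := by omega
  rw [e2]
  simp only [Pi.mul_apply, Pi.pow_apply, id, Nat.add_sub_cancel]
  field_simp
  push_cast
  ring

/-- The key step: eventually `r v / u ≥ m`. -/
lemma key (h : Sys d k p c u v W) (m : ℝ) (hm0 : 0 < m) (hm : m < (d : ℝ) / k)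
    (ho : ∀ δ > 0, ∀ᶠ r in atTop, u r ≤ δ * r ^ (-(2 * (k : ℝ) / (p - k)))) :
    ∃ R > 0, ∀ r ≥ R, m ≤ r * v r / u r := by
  set α : ℝ := 2 * (k : ℝ) / (p - k) with hα
  have hk0 : (0 : ℝ) < k := by exact_mod_cast h.hk
  have hpk : 0 < p - k := by linarith [h.hp]
  have hα0 : 0 < α := by positivity
  set κ : ℝ := d - k * m with hκ
  have hκ0 : 0 < κ := by
    rw [lt_div_iff₀ hk0] at hm; simp only [hκ]; linarith
  -- small parameter
  obtain ⟨ε, hε0, hε1, hε2⟩ : ∃ ε > 0, ε < m ^ k * κ ∧ 2 * ε / κ ≤ α ^ k := by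
    refine ⟨min (m ^ k * κ / 2) (α ^ k * κ / 2), by positivity, ?_, ?_⟩
    · have : 0 < m ^ k * κ := by positivity
      exact lt_of_le_of_lt (min_le_left _ _) (by linarith)
    · rw [div_le_iff₀ hκ0]
      have := min_le_right (m ^ k * κ / 2) (α ^ k * κ / 2)
      linarith
  have hev : ∀ᶠ r in atTop, c * (r ^ (2 * k) * u r ^ (p - k)) ≤ ε := by
    have hδ : 0 < (ε / c) ^ (1 / (p - k)) := Real.rpow_pos_of_pos (div_pos hε0 h.hc) _
    filter_upwards [ho _ hδ, eventually_gt_atTop 0] with r h1 hr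
    have h2 : u r ^ (p - k) ≤ ((ε / c) ^ (1 / (p - k)) * r ^ (-α)) ^ (p - k) :=
      Real.rpow_le_rpow (h.upos r hr).le h1 hpk.le
    rw [Real.mul_rpow hδ.le (Real.rpow_nonneg hr.le _), ← Real.rpow_mul (div_pos hε0 h.hc).le,
      ← Real.rpow_mul hr.le] at h2
    have e1 : 1 / (p - k) * (p - k) = 1 := by field_simp
    have e2 : -α * (p - k) = -((2 * k : ℕ) : ℝ) := by
      rw [hα]; push_cast; field_simp
    rw [e1, e2, Real.rpow_one, Real.rpow_neg hr.le, Real.rpow_natCast] at h2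
    calc c * (r ^ (2 * k) * u r ^ (p - k)) ≤ c * (r ^ (2 * k) * (ε / c * (r ^ (2 * k))⁻¹)) := by
          have := h.hc
          gcongr
      _ = ε := by have := h.hc; field_simp
  obtain ⟨R0, hR0⟩ := eventually_atTop.1 hev
  set R := max R0 1 with hR
  have hRpos : 0 < R := lt_of_lt_of_le one_pos (le_max_right _ _)
  refine ⟨R, hRpos, ?_⟩
  by_contra! hcon
  obtain ⟨r1, hr1, hlt⟩ := hcon
  have hr1pos : 0 < r1 := lt_of_lt_of_le hRpos hr1
  have hE : ∀ r ≥ r1, c * (r ^ (2 * k) * u r ^ (p - k)) ≤ ε := fun r hr =>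
    hR0 r (le_trans (le_max_left _ _) (hr1.le.trans hr))
  set Y : ℝ → ℝ := fun r => W r / (r ^ d * u r ^ k) with hY
  have hYeq : ∀ r, 0 < r → Y r = (r * v r / u r) ^ k := h.Y_eq
  have hypos : ∀ r, 0 < r → 0 < r * v r / u r := fun r hr =>
    div_pos (mul_pos hr (h.vpos r hr)) (h.upos r hr)
  -- barrier
  have hbar : ∀ r ≥ r1, Y r ≤ m ^ k := by
    intro r hr
    refine image_le_of_deriv_right_lt_deriv_boundary (f := Y) (a := r1) (b := r)
      (f' := fun r => (c * (r ^ (2 * k) * u r ^ (p - k)) -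
        W r / (r ^ d * u r ^ k) * (d - k * (r * v r / u r))) / r)
      (B := fun _ => m ^ k) (B' := fun _ => 0) ?_ ?_ ?_ ?_ ?_ ⟨hr, le_rfl⟩
    · intro x hx
      exact (h.Y_deriv x (hr1pos.trans_le hx.1)).continuousAt.continuousWithinAt
    · intro x hx
      exact (h.Y_deriv x (hr1pos.trans_le hx.1)).hasDerivWithinAt
    · rw [hYeq r1 hr1pos]
      exact pow_le_pow_left₀ (hypos r1 hr1pos).le hlt.le k
    · intro x; exact hasDerivAt_const _ _
    · intro x hx hxe
      have hx0 : 0 < x := hr1pos.trans_le hx.1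
      have hym : x * v x / u x = m := by
        rw [hYeq x hx0] at hxe
        exact (pow_left_inj₀ (hypos x hx0).le hm0.le h.hk.ne').1 hxe
      have hxe' : W x / (x ^ d * u x ^ k) = m ^ k := hxe
      rw [hxe', hym]
      apply div_neg_of_neg_of_pos _ hx0
      have := hE x hx.1
      linarith
  have hyle : ∀ r ≥ r1, r * v r / u r ≤ m := by
    intro r hr
    have hr0 := hr1pos.trans_le hr
    have := hbar r hr
    rw [hYeq r hr0] at this
    exact (pow_le_pow_iff_left₀ (hypos r hr0).le hm0.le h.hk.ne').1 this
  -- linear decay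
  have hZd : ∀ r ≥ r1, HasDerivAt (fun r => r ^ κ * (Y r - ε / κ))
      (κ * r ^ (κ - 1) * (Y r - ε / κ) + r ^ κ * ((c * (r ^ (2 * k) * u r ^ (p - k)) -
        W r / (r ^ d * u r ^ k) * (d - k * (r * v r / u r))) / r)) r := by
    intro r hr
    have hr0 := hr1pos.trans_le hr
    exact (Real.hasDerivAt_rpow_const (p := κ) (Or.inl hr0.ne')).mul
      ((h.Y_deriv r hr0).sub_const _)
  have hZ : AntitoneOn (fun r => r ^ κ * (Y r - ε / κ)) (Ici r1) := by
    apply antitoneOn_of_deriv_nonpos (convex_Ici r1)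
    · intro x hx; exact (hZd x hx).continuousAt.continuousWithinAt
    · intro x hx
      rw [interior_Ici] at hx
      exact (hZd x (le_of_lt hx)).differentiableAt.differentiableWithinAt
    · intro x hx
      rw [interior_Ici] at hx
      have hx1 : r1 ≤ x := le_of_lt hx
      have hx0 := hr1pos.trans_le hx1
      rw [(hZd x hx1).deriv, Real.rpow_sub_one hx0.ne']
      have hYx : W x / (x ^ d * u x ^ k) = Y x := rfl
      rw [hYx]
      have hYpos : 0 < Y x := by rw [hYeq x hx0]; exact pow_pos (hypos x hx0) k
      have e : κ * (x ^ κ / x) * (Y x - ε / κ) + x ^ κ * ((c * (x ^ (2 * k) * u x ^ (p - k)) -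
          Y x * (d - k * (x * v x / u x))) / x) = x ^ κ / x *
          (κ * Y x - ε + (c * (x ^ (2 * k) * u x ^ (p - k)) -
          Y x * (d - k * (x * v x / u x)))) := by
        field_simp
      rw [e]
      apply mul_nonpos_of_nonneg_of_nonpos (by positivity)
      have h1 := hE x hx1
      have h2 : Y x * (k * (x * v x / u x)) ≤ Y x * (k * m) := by
        have := hyle x hx1
        gcongr
      simp only [hκ]
      nlinarith
  -- eventually y ≤ α
  have hsmall : ∀ᶠ r in atTop, r1 ≤ r ∧ r * v r / u r ≤ α := by
    have ht := (tendsto_rpow_atTop hκ0).eventually_ge_atTop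
      (r1 ^ κ * (Y r1 - ε / κ) / (ε / κ))
    filter_upwards [ht, eventually_ge_atTop r1] with r h1 hr
    refine ⟨hr, ?_⟩
    have hr0 := hr1pos.trans_le hr
    have h2 : r ^ κ * (Y r - ε / κ) ≤ r1 ^ κ * (Y r1 - ε / κ) :=
      hZ (mem_Ici.2 le_rfl) (mem_Ici.2 hr) hr
    have hq : 0 < ε / κ := by positivity
    rw [div_le_iff₀ hq] at h1
    have h3 : r ^ κ * (Y r - ε / κ) ≤ r ^ κ * (ε / κ) := h2.trans h1
    have h4 := le_of_mul_le_mul_left h3 (Real.rpow_pos_of_pos hr0 κ)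
    have h5 : Y r ≤ α ^ k := by
      have : 2 * ε / κ = ε / κ + ε / κ := by ring
      linarith
    rw [hYeq r hr0] at h5
    exact (pow_le_pow_iff_left₀ (hypos r hr0).le hα0.le h.hk.ne').1 h5
  obtain ⟨r2, hr2⟩ := eventually_atTop.1 hsmall
  set r3 := max r1 r2 with hr3
  have hr3pos : 0 < r3 := hr1pos.trans_le (le_max_left _ _)
  have hmono : MonotoneOn (fun r => u r * r ^ α) (Ici r3) := by
    apply monotoneOn_of_deriv_nonneg (convex_Ici r3)
    · intro x hx
      exact (h.d_umul α x (hr3pos.trans_le hx)).continuousAt.continuousWithinAt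
    · intro x hx
      rw [interior_Ici] at hx
      exact (h.d_umul α x (hr3pos.trans hx)).differentiableAt.differentiableWithinAt
    · intro x hx
      rw [interior_Ici] at hx
      have hx0 : 0 < x := hr3pos.trans hx
      rw [(h.d_umul α x hx0).deriv]
      have h1 := (hr2 x ((le_max_right r1 r2).trans (le_of_lt hx))).2
      have := h.upos x hx0
      rw [div_le_iff₀ this] at h1
      apply mul_nonneg (Real.rpow_nonneg hx0.le _)
      rw [sub_nonneg, le_div_iff₀ hx0]
      linarith
  have ha : 0 < u r3 * r3 ^ α := mul_pos (h.upos _ hr3pos) (Real.rpow_pos_of_pos hr3pos _)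
  obtain ⟨r, hra, hrb⟩ := ((ho _ (half_pos ha)).and (eventually_ge_atTop r3)).exists
  have hr0 : 0 < r := hr3pos.trans_le hrb
  have h6 : u r3 * r3 ^ α ≤ u r * r ^ α := hmono (mem_Ici.2 le_rfl) (mem_Ici.2 hrb) hrb
  have h7 : u r * r ^ α ≤ u r3 * r3 ^ α / 2 := by
    have hq := Real.rpow_pos_of_pos hr0 α
    rw [Real.rpow_neg hr0.le, ← div_eq_mul_inv, le_div_iff₀ hq] at hra
    exact hra
  linarith

lemma final (h : Sys d k p c u v W) (hpβ : (2 * (k : ℝ) + d) * k / d < p)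
    (ho : ∀ δ > 0, ∀ᶠ r in atTop, u r ≤ δ * r ^ (-(2 * (k : ℝ) / (p - k)))) :
    ∃ C, ∀ᶠ r in atTop, u r ≤ C * r ^ (-((d : ℝ) / k)) := by
  have hk0 : (0 : ℝ) < k := by exact_mod_cast h.hk
  have hd0 : (0 : ℝ) < d := by exact_mod_cast h.hd
  have hpk : 0 < p - k := by linarith [h.hp]
  have hp0 : 0 < p := by linarith
  have hc := h.hc
  set β : ℝ := (d : ℝ) / k with hβ
  have hβ0 : 0 < β := by positivity
  have hnp : (2 * (k : ℝ) + d) / p < β := by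
    rw [div_lt_iff₀ hp0, hβ]
    rw [div_lt_iff₀ hd0] at hpβ
    rw [div_mul_eq_mul_div, lt_div_iff₀ hk0]
    linarith
  obtain ⟨m, hm1, hm2⟩ := exists_between hnp
  have hm0 : 0 < m := lt_trans (by positivity) hm1
  obtain ⟨R, hR, hy⟩ := h.key m hm0 hm2 ho
  -- decay of u
  have hanti : AntitoneOn (fun r => u r * r ^ m) (Ici R) := by
    apply antitoneOn_of_deriv_nonpos (convex_Ici R)
    · intro x hx
      exact (h.d_umul m x (hR.trans_le hx)).continuousAt.continuousWithinAt
    · intro x hx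
      rw [interior_Ici] at hx
      exact (h.d_umul m x (hR.trans hx)).differentiableAt.differentiableWithinAt
    · intro x hx
      rw [interior_Ici] at hx
      have hx0 : 0 < x := hR.trans hx
      rw [(h.d_umul m x hx0).deriv]
      have h1 := hy x (le_of_lt hx)
      rw [le_div_iff₀ (h.upos x hx0)] at h1
      apply mul_nonpos_of_nonneg_of_nonpos (Real.rpow_nonneg hx0.le _)
      rw [sub_nonpos, div_le_iff₀ hx0]
      linarith
  set A := u R * R ^ m with hA
  have hA0 : 0 < A := mul_pos (h.upos _ hR) (Real.rpow_pos_of_pos hR _)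
  have huA : ∀ r ≥ R, u r ≤ A * r ^ (-m) := by
    intro r hr
    have hr0 := hR.trans_le hr
    rw [Real.rpow_neg hr0.le, ← div_eq_mul_inv, le_div_iff₀ (Real.rpow_pos_of_pos hr0 _)]
    exact hanti (mem_Ici.2 le_rfl) (mem_Ici.2 hr) hr
  -- boundedness of W
  set s : ℝ := m * p - (2 * k + d) with hs
  have hs0 : 0 < s := by
    rw [div_lt_iff₀ hp0] at hm1; simp only [hs]; linarith
  have hVd : ∀ r ≥ R, HasDerivAt (fun r => W r + c * A ^ p / s * r ^ (-s))
      (c * r ^ (2 * k + d - 1) * u r ^ p + c * A ^ p / s * (-s * r ^ (-s - 1))) r := by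
    intro r hr
    have hr0 := hR.trans_le hr
    exact (h.dW r hr0).add ((Real.hasDerivAt_rpow_const (Or.inl hr0.ne')).const_mul _)
  have hV : AntitoneOn (fun r => W r + c * A ^ p / s * r ^ (-s)) (Ici R) := by
    apply antitoneOn_of_deriv_nonpos (convex_Ici R)
    · intro x hx; exact (hVd x hx).continuousAt.continuousWithinAt
    · intro x hx
      rw [interior_Ici] at hx
      exact (hVd x (le_of_lt hx)).differentiableAt.differentiableWithinAt
    · intro x hx
      rw [interior_Ici] at hx
      have hx1 : R ≤ x := le_of_lt hx
      have hx0 := hR.trans_le hx1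
      rw [(hVd x hx1).deriv]
      have h1 : u x ^ p ≤ (A * x ^ (-m)) ^ p :=
        Real.rpow_le_rpow (h.upos x hx0).le (huA x hx1) hp0.le
      rw [Real.mul_rpow hA0.le (Real.rpow_nonneg hx0.le _), ← Real.rpow_mul hx0.le] at h1
      have h2 : x ^ (2 * k + d - 1) * x ^ (-m * p) = x ^ (-s - 1) := by
        rw [← Real.rpow_natCast, ← Real.rpow_add hx0]
        congr 1
        have : 1 ≤ 2 * k + d := by have := h.hd; omega
        push_cast [Nat.cast_sub this]
        simp only [hs]; ring
      have h3 : c * x ^ (2 * k + d - 1) * u x ^ p ≤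
          c * x ^ (2 * k + d - 1) * (A ^ p * x ^ (-m * p)) := by gcongr
      have h4 : c * x ^ (2 * k + d - 1) * (A ^ p * x ^ (-m * p)) = c * A ^ p * x ^ (-s - 1) := by
        rw [← h2]; ring
      have h5 : c * A ^ p / s * (-s * x ^ (-s - 1)) = -(c * A ^ p * x ^ (-s - 1)) := by
        field_simp
      rw [h5]
      linarith
  set K : ℝ := W R + c * A ^ p / s * R ^ (-s) with hK
  have hWK : ∀ r ≥ R, W r ≤ K := by
    intro r hr
    have hr0 := hR.trans_le hr
    have h1 : W r + c * A ^ p / s * r ^ (-s) ≤ K := hV (mem_Ici.2 le_rfl) (mem_Ici.2 hr) hr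
    have h2 : 0 ≤ c * A ^ p / s * r ^ (-s) := by positivity
    linarith
  have hWpos : ∀ r, 0 < r → 0 < W r := fun r hr => by
    rw [h.hW r hr]; have := h.vpos r hr; positivity
  have hK0 : 0 < K := (hWpos R hR).trans_le (hWK R le_rfl)
  set B : ℝ := K ^ (1 / (k : ℝ)) with hB
  have hB0 : 0 < B := Real.rpow_pos_of_pos hK0 _
  have hv : ∀ r ≥ R, v r ≤ B * r ^ (-β - 1) := by
    intro r hr
    have hr0 := hR.trans_le hr
    have h1 := hWK r hr
    rw [h.hW r hr0] at h1
    rw [← pow_le_pow_iff_left₀ (h.vpos r hr0).le (by positivity) h.hk.ne', mul_pow]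
    have e1 : B ^ k = K := by
      rw [hB, ← Real.rpow_natCast, ← Real.rpow_mul hK0.le]
      rw [one_div, inv_mul_cancel₀ hk0.ne', Real.rpow_one]
    have e2 : (r ^ (-β - 1)) ^ k = (r ^ (k + d))⁻¹ := by
      rw [← Real.rpow_natCast, ← Real.rpow_mul hr0.le, ← Real.rpow_natCast r (k + d),
        ← Real.rpow_neg hr0.le]
      congr 1
      rw [hβ]; push_cast; field_simp; ring
    rw [e1, e2, ← div_eq_mul_inv, le_div_iff₀ (by positivity)]
    linarith
  -- integrate
  have hTd : ∀ r ≥ R, HasDerivAt (fun r => u r - B / β * r ^ (-β))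
      (-v r - B / β * (-β * r ^ (-β - 1))) r := by
    intro r hr
    have hr0 := hR.trans_le hr
    exact (h.du r hr0).sub ((Real.hasDerivAt_rpow_const (Or.inl hr0.ne')).const_mul _)
  have hT : MonotoneOn (fun r => u r - B / β * r ^ (-β)) (Ici R) := by
    apply monotoneOn_of_deriv_nonneg (convex_Ici R)
    · intro x hx; exact (hTd x hx).continuousAt.continuousWithinAt
    · intro x hx
      rw [interior_Ici] at hx
      exact (hTd x (le_of_lt hx)).differentiableAt.differentiableWithinAt
    · intro x hx
      rw [interior_Ici] at hx
      have hx1 : R ≤ x := le_of_lt hx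
      rw [(hTd x hx1).deriv]
      have h1 := hv x hx1
      have h2 : B / β * (-β * x ^ (-β - 1)) = -(B * x ^ (-β - 1)) := by
        field_simp
      rw [h2]; linarith
  refine ⟨B / β, ?_⟩
  filter_upwards [eventually_ge_atTop R] with r hr
  have hlim : Tendsto (fun x => A * x ^ (-m)) atTop (nhds 0) := by
    simpa using (tendsto_rpow_neg_atTop hm0).const_mul A
  have h8 : u r - B / β * r ^ (-β) ≤ 0 := by
    refine ge_of_tendsto hlim ?_
    filter_upwards [eventually_ge_atTop r] with x hx
    have h1 : u r - B / β * r ^ (-β) ≤ u x - B / β * x ^ (-β) :=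
      hT (mem_Ici.2 hr) (mem_Ici.2 (hr.trans hx)) hx
    have hx0 : 0 < x := hR.trans_le (hr.trans hx)
    have h2 := huA x (hr.trans hx)
    have h3 : 0 ≤ B / β * x ^ (-β) := by positivity
    linarith
  linarith

end Sys

lemma deriv_neg_of_sol (n k : ℕ) (p ρ : ℝ) (u : ℝ → ℝ) (hk1 : 1 < k) (hk2 : 2 * k < n)
    (hu : IsRegularSolution n k p ρ u) : ∀ r, 0 < r → deriv u r < 0 := by
  have hbin : 0 < binomC n k := by
    unfold binomC
    exact_mod_cast Nat.choose_pos (by omega)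
  have hk0 : (0 : ℝ) < k := by exact_mod_cast (by omega : 0 < k)
  set D := derivWithin u (Ici 0) with hD
  have hDc : ContinuousOn D (Ici 0) :=
    hu.contDiffOn.continuousOn_derivWithin (uniqueDiffOn_Ici 0) le_rfl
  have hDe : ∀ r, 0 < r → D r = deriv u r := fun r hr =>
    derivWithin_of_mem_nhds (Ici_mem_nhds hr)
  set G : ℝ → ℝ := fun r => r ^ (n - k) * |D r| ^ (k - 1) * D r with hG
  have hGc : ContinuousOn G (Ici 0) := by
    apply ContinuousOn.mul _ hDc
    exact ((continuous_pow _).continuousOn).mul ((hDc.abs).pow _)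
  have hGe : ∀ r, 0 < r → G r = flux n k u r := fun r hr => by
    simp only [hG, flux, hDe r hr]
  have hGanti : StrictAntiOn G (Ici 0) := by
    apply strictAntiOn_of_deriv_neg (convex_Ici 0) hGc
    intro x hx
    rw [interior_Ici] at hx
    have hx0 : 0 < x := hx
    have : G =ᶠ[nhds x] flux n k u := by
      filter_upwards [Ioi_mem_nhds hx0] with y hy using hGe y hy
    rw [this.deriv_eq, (hu.eqn x hx0).deriv]
    have := hu.pos x hx0.le
    have h1 : 0 < (k : ℝ) / binomC n k * x ^ (n - 1) * u x ^ p := by positivity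
    linarith
  intro r hr
  have h1 : G r < G 0 := hGanti (mem_Ici.2 le_rfl) (mem_Ici.2 hr.le) hr
  have h2 : G 0 = 0 := by simp only [hG, hD, hu.deriv_zero, mul_zero]
  rw [h2, hGe r hr, flux] at h1
  by_contra hcon
  push Not at hcon
  have : 0 ≤ r ^ (n - k) * |deriv u r| ^ (k - 1) * deriv u r := by positivity
  linarith

/-- if `u(r) = o(r^{-2k/(p-k)})`, then `u(r) = O(r^{(2k-n)/k})`. -/
theorem littleO_improvement (n k : ℕ) (p ρ : ℝ) (u : ℝ → ℝ)
    (hn : 3 ≤ n) (hk1 : 1 < k) (hk2 : 2 * k < n) (hρ : 0 < ρ)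
    (hp : (n : ℝ) * k / ((n : ℝ) - 2 * k) < p)
    (hu : IsRegularSolution n k p ρ u)
    (ho : u =o[atTop] fun r : ℝ => r ^ (-(2 * (k : ℝ) / (p - k)))) :
    u =O[atTop] fun r : ℝ => r ^ ((2 * (k : ℝ) - n) / k) := by
  have hneg := deriv_neg_of_sol n k p ρ u hk1 hk2 hu
  obtain ⟨d, rfl⟩ : ∃ d, n = 2 * k + d := ⟨n - 2 * k, by omega⟩
  have hd : 0 < d := by omega
  have hbin : 0 < binomC (2 * k + d) k := by
    unfold binomC
    exact_mod_cast Nat.choose_pos (by omega)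
  have hk0 : (0 : ℝ) < k := by exact_mod_cast (by omega : 0 < k)
  have hd0 : (0 : ℝ) < d := by exact_mod_cast hd
  have hp' : (2 * (k : ℝ) + d) * k / d < p := by
    have e : ((2 * k + d : ℕ) : ℝ) * k / (((2 * k + d : ℕ) : ℝ) - 2 * k)
        = (2 * (k : ℝ) + d) * k / d := by
      push_cast; congr 1; ring
    rwa [e] at hp
  have hkp : (k : ℝ) < p := by
    refine lt_trans ?_ hp'
    rw [lt_div_iff₀ hd0]
    nlinarith [mul_pos hk0 hk0]
  have hS : Sys d k p ((k : ℝ) / binomC (2 * k + d) k) u (fun r => -deriv u r)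
      (fun r => -flux (2 * k + d) k u r) := by
    refine ⟨by omega, hd, by positivity, hkp, fun r hr => hu.pos r hr.le,
      fun r hr => by have := hneg r hr; linarith, ?_, ?_, ?_⟩
    · intro r hr
      have : DifferentiableAt ℝ u r :=
        (hu.contDiffOn.differentiableOn one_ne_zero).differentiableAt (Ici_mem_nhds hr)
      simpa using this.hasDerivAt
    · intro r hr
      simp only [flux]
      rw [abs_of_neg (hneg r hr), show 2 * k + d - k = k + d by omega]
      obtain ⟨j, rfl⟩ : ∃ j, k = j + 1 := ⟨k - 1, by omega⟩
      simp only [Nat.add_sub_cancel]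
      ring
    · intro r hr
      refine (hu.eqn r hr).neg.congr_deriv ?_
      ring
  have ho' : ∀ δ > 0, ∀ᶠ r in atTop, u r ≤ δ * r ^ (-(2 * (k : ℝ) / (p - k))) := by
    intro δ hδ
    filter_upwards [ho.def hδ, eventually_gt_atTop 0] with r h1 hr
    rw [Real.norm_of_nonneg (hu.pos r hr.le).le,
      Real.norm_of_nonneg (Real.rpow_nonneg hr.le _)] at h1
    exact h1
  obtain ⟨C, hC⟩ := hS.final hp' ho'
  refine IsBigO.of_bound C ?_
  filter_upwards [hC, eventually_gt_atTop 0] with r h1 hr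
  rw [Real.norm_of_nonneg (hu.pos r hr.le).le, Real.norm_of_nonneg (Real.rpow_nonneg hr.le _)]
  convert h1 using 3
  push_cast
  ring

end KHessianPaper
end
end

section
/- Let n ≥ 3, k an integer with 1 < k < n/2, and p > nk/(n-2k). Let u be a regular solution of the initial value problem -(1/k)·C(n-1,k-1)·(r^{n-k}|u'|^{k-1}u')' = r^{n-1}u^p, u > 0, u'(0) = 0, u(0) = ρ > 0. If the limit B := lim_{r→∞} u(r)·r^{2k/(p-k)} exists and is positive, then B = A, where A = ((1/k)·C(n-1,k-1))^{1/(p-k)}·(2k/(p-k))^{k/(p-k)}·(n − 2pk/(p-k))^{1/(p-k)}. -/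
open MeasureTheory Real Set Filter Asymptotics

noncomputable section

namespace KHessianPaper

/-- Integration of a little-o bound on the derivative. -/
lemma little_o_of_deriv (f f' : ℝ → ℝ) (m : ℝ) (hm : 0 < m)
    (hf : ∀ r, 0 < r → HasDerivAt f (f' r) r)
    (h : Tendsto (fun r => f' r / r ^ (m - 1)) atTop (nhds 0)) :
    Tendsto (fun r => f r / r ^ m) atTop (nhds 0) := by
  rw [Metric.tendsto_atTop] at h ⊢
  intro ε hε
  obtain ⟨R0, hR0⟩ := h (ε / 2 * m) (by positivity)
  set R := max R0 1 with hR
  have hR1 : 1 ≤ R := le_max_right _ _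
  have hb : ∀ r, R ≤ r → |f' r| ≤ ε / 2 * (m * r ^ (m - 1)) := by
    intro r hr
    have hr0 : 0 < r := by linarith
    have := hR0 r (le_trans (le_max_left _ _) hr)
    have hp : 0 < r ^ (m - 1) := Real.rpow_pos_of_pos hr0 _
    rw [Real.dist_eq, sub_zero, abs_div, abs_of_pos hp, div_lt_iff₀ hp] at this
    linarith
  have hd : ∀ r, R ≤ r → HasDerivAt (fun r : ℝ => r ^ m) (m * r ^ (m - 1)) r := by
    intro r hr
    exact Real.hasDerivAt_rpow_const (Or.inl (by linarith))
  have hmono : MonotoneOn (fun r => f r + ε / 2 * r ^ m) (Ici R) := by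
    have hD : ∀ r, R ≤ r → HasDerivAt (fun r => f r + ε / 2 * r ^ m)
        (f' r + ε / 2 * (m * r ^ (m - 1))) r := fun r hr =>
      (hf r (by linarith)).add ((hd r hr).const_mul _)
    refine monotoneOn_of_deriv_nonneg (convex_Ici R)
      (fun r hr => (hD r hr).continuousAt.continuousWithinAt) ?_ ?_
    · intro r hr
      rw [interior_Ici] at hr
      exact (hD r (le_of_lt hr)).differentiableAt.differentiableWithinAt
    · intro r hr
      rw [interior_Ici] at hr
      rw [(hD r (le_of_lt hr)).deriv]
      have := (abs_le.mp (hb r (le_of_lt hr))).1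
      linarith
  have hanti : AntitoneOn (fun r => f r - ε / 2 * r ^ m) (Ici R) := by
    have hD : ∀ r, R ≤ r → HasDerivAt (fun r => f r - ε / 2 * r ^ m)
        (f' r - ε / 2 * (m * r ^ (m - 1))) r := fun r hr =>
      (hf r (by linarith)).sub ((hd r hr).const_mul _)
    refine antitoneOn_of_deriv_nonpos (convex_Ici R)
      (fun r hr => (hD r hr).continuousAt.continuousWithinAt) ?_ ?_
    · intro r hr
      rw [interior_Ici] at hr
      exact (hD r (le_of_lt hr)).differentiableAt.differentiableWithinAt
    · intro r hr
      rw [interior_Ici] at hr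
      rw [(hD r (le_of_lt hr)).deriv]
      have := (abs_le.mp (hb r (le_of_lt hr))).2
      linarith
  have hbig := (tendsto_rpow_atTop hm).eventually_gt_atTop (|f R| / (ε / 2))
  obtain ⟨R2, hR2⟩ := Filter.eventually_atTop.mp hbig
  refine ⟨max R R2, fun r hr => ?_⟩
  have hrR : R ≤ r := le_trans (le_max_left _ _) hr
  have h2 := hR2 r (le_trans (le_max_right _ _) hr)
  have hr0 : 0 < r := by linarith
  have hp : 0 < r ^ m := Real.rpow_pos_of_pos hr0 _
  have hpR : 0 < R ^ m := Real.rpow_pos_of_pos (by linarith) _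
  rw [div_lt_iff₀ (by positivity)] at h2
  have a1 := hmono (mem_Ici.mpr le_rfl) (mem_Ici.mpr hrR) hrR
  have a2 := hanti (mem_Ici.mpr le_rfl) (mem_Ici.mpr hrR) hrR
  simp only at a1 a2
  rw [Real.dist_eq, sub_zero, abs_div, abs_of_pos hp, div_lt_iff₀ hp, abs_lt]
  have b1 := neg_abs_le (f R)
  have b2 := le_abs_self (f R)
  have b3 : 0 < ε / 2 * R ^ m := by positivity
  constructor <;> nlinarith

/-- if the limit `B = lim u(r) r^{2k/(p-k)}` exists and is positive,
it equals the constant `A` of the singular solution. -/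
theorem limit_is_A (n k : ℕ) (p ρ B : ℝ) (u : ℝ → ℝ)
    (hn : 3 ≤ n) (hk1 : 1 < k) (hk2 : 2 * k < n) (hρ : 0 < ρ)
    (hp : (n : ℝ) * k / ((n : ℝ) - 2 * k) < p)
    (hu : IsRegularSolution n k p ρ u)
    (hB : Tendsto (fun r : ℝ => u r * r ^ (2 * (k : ℝ) / (p - k))) atTop (nhds B))
    (hBpos : 0 < B) :
    B = Aconst n k p := by
  have hkR : (1 : ℝ) < k := by exact_mod_cast hk1
  have hk0 : (0 : ℝ) < k := by linarith
  have hkn : 2 * (k : ℝ) < n := by exact_mod_cast hk2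
  have hd0 : 0 < (n : ℝ) - 2 * k := by linarith
  have hpn : (n : ℝ) * k < p * ((n : ℝ) - 2 * k) := by rwa [div_lt_iff₀ hd0] at hp
  have hpk : 0 < p - k := by
    by_contra hcon
    push Not at hcon
    nlinarith
  have hp0 : 0 < p := by linarith
  have hCpos : 0 < binomC n k := by
    unfold binomC
    exact_mod_cast Nat.choose_pos (by omega)
  set α : ℝ := 2 * (k : ℝ) / (p - k) with hα
  have hα0 : 0 < α := by positivity
  have hαpk : α * (p - k) = 2 * k := by rw [hα]; field_simp
  have hmeq : (n : ℝ) - 2 * p * k / (p - k) = n - α * p := by rw [hα]; ring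
  set m : ℝ := n - α * p with hm
  have hm0 : 0 < m := by
    rw [← hmeq, sub_pos, div_lt_iff₀ hpk]; nlinarith
  set c : ℝ := (k : ℝ) / binomC n k with hc
  have hc0 : 0 < c := by positivity
  set L : ℝ := c * B ^ p / m with hL
  have hBp : 0 < B ^ p := Real.rpow_pos_of_pos hBpos _
  have hL0 : 0 < L := by positivity
  -- the flux asymptotics
  have hflux : Tendsto (fun r => (flux n k u r + L * r ^ m) / r ^ m) atTop (nhds 0) := by
    refine little_o_of_deriv _
      (fun r => -c * r ^ (n - 1) * u r ^ p + L * (m * r ^ (m - 1))) m hm0 ?_ ?_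
    · intro r hr
      exact (hu.eqn r hr).add ((Real.hasDerivAt_rpow_const (Or.inl hr.ne')).const_mul _)
    · have h1 : Tendsto (fun r => -c * (u r * r ^ α) ^ p + L * m) atTop
          (nhds (-c * B ^ p + L * m)) :=
        ((hB.rpow_const (Or.inl hBpos.ne')).const_mul _).add_const _
      have h2 : -c * B ^ p + L * m = 0 := by rw [hL]; field_simp; ring
      rw [h2] at h1
      refine h1.congr' ?_
      filter_upwards [eventually_gt_atTop 0] with r hr
      have hq : 0 < r ^ (m - 1) := Real.rpow_pos_of_pos hr _
      rw [eq_div_iff hq.ne', Real.mul_rpow (hu.pos r hr.le).le (Real.rpow_nonneg hr.le _),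
        ← Real.rpow_mul hr.le]
      have h3 : r ^ (α * p) * r ^ (m - 1) = r ^ (n - 1) := by
        rw [← Real.rpow_add hr, ← Real.rpow_natCast, Nat.cast_sub (by omega)]
        congr 1
        rw [hm]; push_cast; ring
      rw [← h3]; ring
  have hpow : Tendsto (fun r => (-(deriv u r) * r ^ (α + 1)) *
      |-(deriv u r) * r ^ (α + 1)| ^ (k - 1)) atTop (nhds L) := by
    have h1 := hflux.const_sub L
    rw [sub_zero] at h1
    refine h1.congr' ?_
    filter_upwards [eventually_gt_atTop 0] with r hr
    have hq : 0 < r ^ m := Real.rpow_pos_of_pos hr _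
    have hq1 : 0 < r ^ (α + 1) := Real.rpow_pos_of_pos hr _
    have h3 : r ^ (α + 1) * (r ^ (α + 1)) ^ (k - 1) * r ^ m = r ^ (n - k) := by
      rw [mul_comm (r ^ (α + 1)), ← pow_succ, Nat.sub_add_cancel (by omega),
        ← Real.rpow_natCast, ← Real.rpow_mul hr.le, ← Real.rpow_add hr, ← Real.rpow_natCast,
        Nat.cast_sub (by omega)]
      congr 1
      rw [hm]; linarith
    rw [abs_mul, abs_neg, abs_of_pos hq1, mul_pow]
    unfold flux
    rw [← h3]
    field_simp
    ring
  have hpos : ∀ᶠ r in atTop, 0 < -(deriv u r) * r ^ (α + 1) := by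
    filter_upwards [hpow.eventually (lt_mem_nhds hL0)] with r hr
    by_contra hcon
    push Not at hcon
    have := mul_nonpos_of_nonpos_of_nonneg hcon
      (pow_nonneg (abs_nonneg (-(deriv u r) * r ^ (α + 1))) (k - 1))
    linarith
  have hder : Tendsto (fun r => -(deriv u r) * r ^ (α + 1)) atTop
      (nhds (L ^ (1 / (k : ℝ)))) := by
    refine (hpow.rpow_const (p := 1 / (k : ℝ)) (Or.inl hL0.ne')).congr' ?_
    filter_upwards [hpos] with r hr
    rw [abs_of_pos hr, ← pow_succ', Nat.sub_add_cancel (by omega), ← Real.rpow_natCast,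
      ← Real.rpow_mul hr.le, mul_one_div_cancel hk0.ne', Real.rpow_one]
  have hneg : Tendsto (fun r : ℝ => r ^ (-α)) atTop (nhds 0) := tendsto_rpow_neg_atTop hα0
  have hu0 : Tendsto u atTop (nhds 0) := by
    have h1 := hB.mul hneg
    rw [mul_zero] at h1
    refine h1.congr' ?_
    filter_upwards [eventually_gt_atTop 0] with r hr
    rw [mul_assoc, ← Real.rpow_add hr]; simp
  have hlim : Tendsto (fun r => u r / r ^ (-α)) atTop (nhds (L ^ (1 / (k : ℝ)) / α)) := by
    refine HasDerivAt.lhopital_zero_atTop (f' := deriv u)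
      (g' := fun r => -α * r ^ (-α - 1)) ?_ ?_ ?_ hu0 hneg ?_
    · filter_upwards [eventually_gt_atTop 0] with r hr
      have := (hu.contDiffOn.differentiableOn (by norm_num)).differentiableAt
        (Ici_mem_nhds hr)
      exact this.hasDerivAt
    · filter_upwards [eventually_gt_atTop 0] with r hr
      exact Real.hasDerivAt_rpow_const (Or.inl hr.ne')
    · filter_upwards [eventually_gt_atTop 0] with r hr
      have : 0 < r ^ (-α - 1) := Real.rpow_pos_of_pos hr _
      exact mul_ne_zero (by linarith) this.ne'
    · refine (hder.div_const α).congr' ?_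
      filter_upwards [eventually_gt_atTop 0] with r hr
      have h4 : r ^ (-α - 1) = (r ^ (α + 1))⁻¹ := by
        rw [← Real.rpow_neg hr.le]; congr 1; ring
      have hq1 : 0 < r ^ (α + 1) := Real.rpow_pos_of_pos hr _
      rw [h4]
      field_simp
  have hBeq : B = L ^ (1 / (k : ℝ)) / α := by
    refine tendsto_nhds_unique hB (hlim.congr' ?_)
    filter_upwards [eventually_gt_atTop 0] with r hr
    rw [Real.rpow_neg hr.le, div_inv_eq_mul]
  have hBk : B ^ (k : ℝ) * α ^ (k : ℝ) = L := by
    rw [← Real.mul_rpow hBpos.le hα0.le]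
    have : B * α = L ^ (1 / (k : ℝ)) := by
      nth_rewrite 1 [hBeq]
      field_simp
    rw [this, ← Real.rpow_mul hL0.le, one_div_mul_cancel hk0.ne', Real.rpow_one]
  have hsplit : B ^ p = B ^ (p - k) * B ^ (k : ℝ) := by
    rw [← Real.rpow_add hBpos]; congr 1; ring
  have hBkpos : 0 < B ^ (k : ℝ) := Real.rpow_pos_of_pos hBpos _
  have hαk : 0 < α ^ (k : ℝ) := Real.rpow_pos_of_pos hα0 _
  have hD0 : 0 < (1 / (k : ℝ)) * binomC n k := by positivity
  have hcD : c * ((1 / (k : ℝ)) * binomC n k) = 1 := by rw [hc]; field_simp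
  have hmain : B ^ (p - k) = (1 / (k : ℝ)) * binomC n k * α ^ (k : ℝ) * m := by
    have h5 : α ^ (k : ℝ) * m = c * B ^ (p - k) := by
      have h6 : B ^ (k : ℝ) * α ^ (k : ℝ) * m = c * (B ^ (p - k) * B ^ (k : ℝ)) := by
        rw [hBk, hL, ← hsplit]; field_simp
      apply mul_left_cancel₀ hBkpos.ne'
      linarith
    calc B ^ (p - k) = (c * ((1 / (k : ℝ)) * binomC n k)) * B ^ (p - k) := by
          rw [hcD, one_mul]
      _ = (1 / (k : ℝ)) * binomC n k * (c * B ^ (p - k)) := by ring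
      _ = _ := by rw [← h5]; ring
  have hfin : B = (B ^ (p - k)) ^ (1 / (p - (k : ℝ))) := by
    rw [← Real.rpow_mul hBpos.le, mul_one_div_cancel hpk.ne', Real.rpow_one]
  rw [hfin, hmain, Real.mul_rpow (by positivity) hm0.le, Real.mul_rpow hD0.le hαk.le,
    ← Real.rpow_mul hα0.le]
  unfold Aconst
  rw [hmeq, mul_one_div]

end KHessianPaper
end
end

section
/- Let n ≥ 3, k an integer with 1 < k < n/2, and p > (n+2)k/(n-2k). Then the initial value problem -(1/k)·C(n-1,k-1)·(r^{n-k}|u'|^{k-1}u')' = r^{n-1}u^p, u'(0) = 0, u(0) = 1, has an entire regular solution, i.e., a solution u with u(r) > 0 for all r ≥ 0. -/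
open MeasureTheory Real Set Filter Asymptotics

noncomputable section

namespace KHessianPaper

/-- Abstract Picard existence lemma for Volterra operators on `[0,∞)`, via a weighted norm. -/
lemma volterra_fixed (Φ : (ℝ → ℝ) → ℝ → ℝ) (K : ℝ → ℝ) (hK : Continuous K)
    (hK0 : ∀ t, 0 ≤ K t)
    (hΦc : ∀ y, Continuous y → Continuous (Φ y))
    (hΦb : ∀ y, Continuous y → ∀ t, 0 ≤ t → |Φ y t| ≤ K t)
    (hΦl : ∀ y₁ y₂, Continuous y₁ → Continuous y₂ → ∀ t M, 0 ≤ t → 0 ≤ M →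
      (∀ s, 0 ≤ s → s ≤ t → |y₁ s - y₂ s| ≤ M) → |Φ y₁ t - Φ y₂ t| ≤ K t * M) :
    ∃ y : ℝ → ℝ, Continuous y ∧ ∀ r, 0 ≤ r → y r = 1 - ∫ t in (0:ℝ)..r, Φ y t := by
  set Λ : ℝ → ℝ := fun r => 2 * ∫ t in (0:ℝ)..r, K t with hΛ
  have hΛd : ∀ r, HasDerivAt Λ (2 * K r) r := fun r =>
    (intervalIntegral.integral_hasDerivAt_right (hK.intervalIntegrable _ _)
      hK.stronglyMeasurable.stronglyMeasurableAtFilter hK.continuousAt).const_mul 2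
  have hΛc : Continuous Λ := continuous_iff_continuousAt.2 fun r => (hΛd r).continuousAt
  have hΛm : Monotone Λ := by
    apply monotone_of_deriv_nonneg (fun r => (hΛd r).differentiableAt)
    intro r; rw [(hΛd r).deriv]; have := hK0 r; positivity
  have hΛ0 : Λ 0 = 0 := by simp [hΛ]
  set Y : BoundedContinuousFunction ℝ ℝ → ℝ → ℝ := fun z s => exp (Λ |s|) * z s with hY
  have hYc : ∀ z, Continuous (Y z) := fun z => by
    simp only [hY]; fun_prop
  set S0 : BoundedContinuousFunction ℝ ℝ → ℝ → ℝ := fun z r =>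
    exp (-Λ |r|) * (1 - ∫ t in (0:ℝ)..|r|, Φ (Y z) t) with hS0
  have hS0c : ∀ z, Continuous (S0 z) := fun z => by
    have h1 : Continuous fun r => ∫ t in (0:ℝ)..r, Φ (Y z) t :=
      intervalIntegral.continuous_primitive
        (fun a b => (hΦc _ (hYc z)).intervalIntegrable a b) 0
    have h2 : Continuous fun r : ℝ => ∫ t in (0:ℝ)..|r|, Φ (Y z) t := h1.comp continuous_abs
    simp only [hS0]
    exact (by fun_prop : Continuous fun r => exp (-Λ |r|)).mul (continuous_const.sub h2)
  have hS0b : ∀ z r, ‖S0 z r‖ ≤ 1 := fun z r => by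
    have hr := abs_nonneg r
    simp only [hS0, norm_mul, Real.norm_eq_abs, Real.abs_exp]
    have h1 : |∫ t in (0:ℝ)..|r|, Φ (Y z) t| ≤ ∫ t in (0:ℝ)..|r|, K t := by
      rw [← Real.norm_eq_abs]
      apply intervalIntegral.norm_integral_le_of_norm_le hr
      · filter_upwards with t ht
        exact hΦb _ (hYc z) t ht.1.le
      · exact hK.intervalIntegrable _ _
    have h2 : (∫ t in (0:ℝ)..|r|, K t) = Λ |r| / 2 := by simp [hΛ]
    have h3 : 0 ≤ Λ |r| := by rw [← hΛ0]; exact hΛm hr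
    have h4 : |1 - ∫ t in (0:ℝ)..|r|, Φ (Y z) t| ≤ exp (Λ |r|) := by
      have := Real.add_one_le_exp (Λ |r|)
      rw [abs_le] at *
      constructor <;> linarith [h1.1, h1.2]
    rw [Real.exp_neg, inv_mul_le_iff₀ (Real.exp_pos _)]
    linarith
  set S : BoundedContinuousFunction ℝ ℝ → BoundedContinuousFunction ℝ ℝ := fun z =>
    BoundedContinuousFunction.ofNormedAddCommGroup (S0 z) (hS0c z) 1 (hS0b z) with hS
  have hcon : ContractingWith (1/2) S := by
    refine ⟨by norm_num, LipschitzWith.of_dist_le_mul fun z₁ z₂ => ?_⟩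
    rw [BoundedContinuousFunction.dist_le (by positivity)]
    intro r
    have hr := abs_nonneg r
    set D := dist z₁ z₂ with hD
    have hD0 : 0 ≤ D := dist_nonneg
    show |S0 z₁ r - S0 z₂ r| ≤ _
    have e1 : S0 z₁ r - S0 z₂ r = exp (-Λ |r|) *
        ∫ t in (0:ℝ)..|r|, (Φ (Y z₂) t - Φ (Y z₁) t) := by
      rw [intervalIntegral.integral_sub ((hΦc _ (hYc z₂)).intervalIntegrable _ _)
        ((hΦc _ (hYc z₁)).intervalIntegrable _ _)]
      simp only [hS0]; ring
    have e2 : |∫ t in (0:ℝ)..|r|, (Φ (Y z₂) t - Φ (Y z₁) t)| ≤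
        ∫ t in (0:ℝ)..|r|, K t * (exp (Λ t) * D) := by
      rw [← Real.norm_eq_abs]
      apply intervalIntegral.norm_integral_le_of_norm_le hr
      · filter_upwards with t ht
        apply hΦl _ _ (hYc z₂) (hYc z₁) t _ ht.1.le (by positivity)
        intro s hs0 hst
        simp only [hY, ← mul_sub, abs_mul, Real.abs_exp, abs_of_nonneg hs0]
        apply mul_le_mul (Real.exp_le_exp.2 (hΛm hst)) _ (abs_nonneg _) (Real.exp_pos _).le
        rw [abs_sub_comm]
        exact BoundedContinuousFunction.dist_coe_le_dist (f := z₁) (g := z₂) s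
      · exact (by fun_prop : Continuous fun t => K t * (exp (Λ t) * D)).intervalIntegrable _ _
    have e3 : (∫ t in (0:ℝ)..|r|, K t * (exp (Λ t) * D)) = D/2 * exp (Λ |r|) - D/2 * exp (Λ 0) := by
      apply intervalIntegral.integral_eq_sub_of_hasDerivAt (f := fun t => D/2 * exp (Λ t))
      · intro t _
        refine (((hΛd t).exp).const_mul (D/2)).congr_deriv ?_
        ring
      · exact (by fun_prop : Continuous fun t => K t * (exp (Λ t) * D)).intervalIntegrable _ _
    rw [e1, abs_mul, Real.abs_exp, Real.exp_neg, inv_mul_le_iff₀ (Real.exp_pos _)]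
    refine e2.trans ?_
    rw [e3]
    have : 0 ≤ D/2 * exp (Λ 0) := by positivity
    push_cast
    linarith
  refine ⟨Y (hcon.fixedPoint S), hYc _, fun r hr => ?_⟩
  have hf : S (hcon.fixedPoint S) = hcon.fixedPoint S := hcon.fixedPoint_isFixedPt
  set z := hcon.fixedPoint S with hz
  have h1 : z r = S0 z r := by
    conv_lhs => rw [← hf]
    rfl
  show exp (Λ |r|) * z r = _
  rw [h1]
  simp only [hS0, abs_of_nonneg hr]
  rw [← mul_assoc, ← Real.exp_add]; simp

/-- Radial averages. -/
def av (n : ℕ) (F : ℝ → ℝ) (t : ℝ) : ℝ := ∫ σ in (0:ℝ)..1, σ ^ (n - 1) * F (t * σ)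

lemma av_continuous (n : ℕ) {F : ℝ → ℝ} (hF : Continuous F) : Continuous (av n F) := by
  unfold av
  apply intervalIntegral.continuous_parametric_intervalIntegral_of_continuous'
  fun_prop

lemma av_ii (n : ℕ) {F : ℝ → ℝ} (hF : Continuous F) (t : ℝ) :
    IntervalIntegrable (fun σ => σ ^ (n - 1) * F (t * σ)) volume 0 1 :=
  (by fun_prop : Continuous fun σ => σ ^ (n - 1) * F (t * σ)).intervalIntegrable _ _

lemma av_lower (n : ℕ) (hn : 1 ≤ n) {F : ℝ → ℝ} (hF : Continuous F) (t a : ℝ) (ht : 0 ≤ t)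
    (h : ∀ s, 0 ≤ s → s ≤ t → a ≤ F s) : a / n ≤ av n F t := by
  have e : a / n = ∫ σ in (0:ℝ)..1, σ ^ (n - 1) * a := by
    obtain ⟨m, rfl⟩ : ∃ m, n = m + 1 := ⟨n - 1, by omega⟩
    rw [intervalIntegral.integral_mul_const, integral_pow]
    simp; ring
  rw [e]
  apply intervalIntegral.integral_mono_on (by norm_num) _ (av_ii n hF t)
  · intro σ hσ
    apply mul_le_mul_of_nonneg_left _ (pow_nonneg hσ.1 _)
    exact h _ (mul_nonneg ht hσ.1) (mul_le_of_le_one_right ht hσ.2)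
  · exact (by fun_prop : Continuous fun σ : ℝ => σ ^ (n - 1) * a).intervalIntegrable _ _

lemma av_abs_le (n : ℕ) {F : ℝ → ℝ} (t a : ℝ) (ht : 0 ≤ t)
    (h : ∀ s, 0 ≤ s → s ≤ t → |F s| ≤ a) : |av n F t| ≤ a := by
  unfold av
  rw [← Real.norm_eq_abs]
  have := intervalIntegral.norm_integral_le_of_norm_le_const (a := (0:ℝ)) (b := 1)
    (f := fun σ => σ ^ (n - 1) * F (t * σ)) (C := a) (by
      intro σ hσ
      rw [uIoc_of_le (by norm_num)] at hσ
      rw [Real.norm_eq_abs, abs_mul, abs_of_nonneg (pow_nonneg hσ.1.le _)]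
      have h1 := h (t * σ) (mul_nonneg ht hσ.1.le) (mul_le_of_le_one_right ht hσ.2)
      have h2 : σ ^ (n - 1) ≤ 1 := pow_le_one₀ hσ.1.le hσ.2
      calc _ ≤ 1 * |F (t * σ)| := by gcongr
        _ ≤ a := by linarith)
  simpa using this

lemma av_sub (n : ℕ) {F₁ F₂ : ℝ → ℝ} (h1 : Continuous F₁) (h2 : Continuous F₂) (t : ℝ) :
    av n F₁ t - av n F₂ t = av n (fun s => F₁ s - F₂ s) t := by
  unfold av
  rw [← intervalIntegral.integral_sub (av_ii n h1 t) (av_ii n h2 t)]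
  congr 1; ext σ; ring

lemma av_eq (n : ℕ) (hn : 1 ≤ n) (F : ℝ → ℝ) (t : ℝ) :
    t ^ n * av n F t = ∫ s in (0:ℝ)..t, s ^ (n - 1) * F s := by
  have := intervalIntegral.mul_integral_comp_mul_left (a := 0) (b := 1)
    (f := fun s => s ^ (n - 1) * F s) t
  simp only [mul_zero, mul_one] at this
  rw [← this]
  obtain ⟨m, rfl⟩ : ∃ m, n = m + 1 := ⟨n - 1, by omega⟩
  rw [pow_succ', mul_assoc]
  congr 1
  rw [av, ← intervalIntegral.integral_const_mul]
  congr 1; ext σ; simp; ring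

lemma av_mul_hasDerivAt (n : ℕ) (hn : 1 ≤ n) {F : ℝ → ℝ} (hF : Continuous F) (t : ℝ) :
    HasDerivAt (fun t => t ^ n * av n F t) (t ^ (n - 1) * F t) t := by
  simp_rw [av_eq n hn F]
  have hc : Continuous fun s => s ^ (n - 1) * F s := by fun_prop
  exact intervalIntegral.integral_hasDerivAt_right (hc.intervalIntegrable _ _)
      hc.stronglyMeasurable.stronglyMeasurableAtFilter hc.continuousAt

lemma av_zero (n : ℕ) (hn : 1 ≤ n) (F : ℝ → ℝ) : n * av n F 0 = F 0 := by
  obtain ⟨m, rfl⟩ : ∃ m, n = m + 1 := ⟨n - 1, by omega⟩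
  simp only [av, zero_mul, intervalIntegral.integral_mul_const, integral_pow]
  simp
  field_simp

lemma av_hasDerivAt (n : ℕ) (hn : 1 ≤ n) {F : ℝ → ℝ} (hF : Continuous F) (t : ℝ) (ht : 0 < t) :
    HasDerivAt (av n F) ((F t - n * av n F t) / t) t := by
  have h1 := (av_mul_hasDerivAt n hn hF t).div (hasDerivAt_pow n t) (by positivity)
  have h2 : av n F =ᶠ[nhds t] ((fun t => t ^ n * av n F t) / fun t => t ^ n) := by
    filter_upwards [lt_mem_nhds ht] with s hs
    simp only [Pi.div_apply]
    field_simp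
  refine (h1.congr_of_eventuallyEq h2).congr_deriv ?_
  obtain ⟨m, rfl⟩ : ∃ m, n = m + 1 := ⟨n - 1, by omega⟩
  simp
  field_simp
  ring

lemma root_lip (k : ℕ) (hk : 1 ≤ k) (a x y : ℝ) (ha : 0 ≤ a) (hx : a ≤ x) (hy : a ≤ y) :
    |x - y| * a ^ (k - 1) ≤ |x ^ k - y ^ k| := by
  wlog h : y ≤ x generalizing x y
  · rw [abs_sub_comm, abs_sub_comm (x ^ k)]; exact this y x hy hx (by linarith)
  obtain ⟨m, rfl⟩ : ∃ m, k = m + 1 := ⟨k - 1, by omega⟩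
  have hy0 : 0 ≤ y := ha.trans hy
  have hx0 : 0 ≤ x := ha.trans hx
  have h1 : y ^ m ≤ x ^ m := by gcongr
  have h2 : a ^ m ≤ x ^ m := by gcongr
  rw [abs_of_nonneg (by linarith), abs_of_nonneg (by have : y ^ (m+1) ≤ x ^ (m+1) := by gcongr
                                                     linarith)]
  simp only [Nat.add_sub_cancel, pow_succ]
  nlinarith [mul_le_mul_of_nonneg_right h1 hy0, mul_le_mul_of_nonneg_left h2 (sub_nonneg.2 h)]

lemma rpow_lip (p x y : ℝ) (hp : 1 ≤ p) (hx : 0 ≤ x) (hx1 : x ≤ 1) (hy : 0 ≤ y) (hy1 : y ≤ 1) :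
    |x ^ p - y ^ p| ≤ p * |x - y| := by
  have := Convex.norm_image_sub_le_of_norm_hasDerivWithin_le (f := fun x : ℝ => x ^ p)
    (f' := fun x => p * x ^ (p - 1)) (s := Icc 0 1) (C := p) (x := y) (y := x)
    (fun x hx => (Real.hasDerivAt_rpow_const (Or.inr hp)).hasDerivWithinAt)
    (by
      intro x hx
      rw [Real.norm_eq_abs, abs_of_nonneg (mul_nonneg (by linarith) (Real.rpow_nonneg hx.1 _))]
      have := Real.rpow_le_one hx.1 hx.2 (by linarith : 0 ≤ p - 1)
      nlinarith) (convex_Icc 0 1) ⟨hy, hy1⟩ ⟨hx, hx1⟩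
  simpa using this


lemma norm_hasFDerivAt {E : Type*} [NormedAddCommGroup E] [InnerProductSpace ℝ E] (x : E)
    (hx : x ≠ 0) : HasFDerivAt (fun x : E => ‖x‖) (‖x‖⁻¹ • innerSL ℝ x) x := by
  have h := (hasStrictFDerivAt_norm_sq x).hasFDerivAt.sqrt (by simpa using hx)
  have h0 : ‖x‖ ≠ 0 := by simpa using hx
  simp only [Real.sqrt_sq (norm_nonneg _)] at h
  refine h.congr_fderiv ?_
  ext y
  simp
  field_simp

/-- Radial functions whose gradient is `G(|x|) x`. -/
lemma radial_contDiff (n : ℕ) (u G H : ℝ → ℝ) (hG : Continuous G) (hH : Continuous H)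
    (hH0 : H 0 = 0) (hGd : ∀ r, 0 < r → HasDerivAt G (H r / r) r)
    (hu : ∀ r, HasDerivAt u (r * G r) r) :
    ContDiff ℝ 2 (fun x : EuclideanSpace ℝ (Fin n) => u ‖x‖) := by
  set E := EuclideanSpace ℝ (Fin n) with hE
  have hV : ContDiff ℝ 1 (fun x : E => G ‖x‖ • x) := by
    rw [contDiff_one_iff_hasFDerivAt]
    refine ⟨fun x => G ‖x‖ • ContinuousLinearMap.id ℝ E +
      (H ‖x‖ * ‖x‖⁻¹ * ‖x‖⁻¹) • ContinuousLinearMap.smulRight (innerSL ℝ x) x, ?_, ?_⟩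
    · apply Continuous.add (by fun_prop)
      rw [continuous_iff_continuousAt]
      intro x
      by_cases hx : x = 0
      · subst hx
        have hc : Continuous fun x : E => H ‖x‖ := by fun_prop
        have ht : Tendsto (fun x : E => ‖H ‖x‖‖) (nhds 0) (nhds 0) := by
          have := (hc.norm).tendsto (0:E)
          simpa [hH0] using this
        rw [ContinuousAt]
        have e0 : (H ‖(0:E)‖ * ‖(0:E)‖⁻¹ * ‖(0:E)‖⁻¹) •
          ContinuousLinearMap.smulRight (innerSL ℝ (0:E)) (0:E) = 0 := by simp
        rw [e0]
        apply squeeze_zero_norm _ ht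
        intro x
        rw [norm_smul, norm_mul, norm_mul, ContinuousLinearMap.norm_smulRight_apply,
          innerSL_apply_norm, norm_inv, norm_norm]
        by_cases h : ‖x‖ = 0
        · simp [h]
        · field_simp; rfl
      · have hx0 : ‖x‖ ≠ 0 := norm_ne_zero_iff.2 hx
        have h1 : ContinuousAt (fun x : E => ‖x‖⁻¹) x := continuousAt_id.norm.inv₀ hx0
        have h2 : Continuous (fun x : E => H ‖x‖) := by fun_prop
        have h3 : Continuous (fun x : E => ContinuousLinearMap.smulRight (innerSL ℝ x) x) := by
          fun_prop
        exact ((h2.continuousAt.mul h1).mul h1).smul h3.continuousAt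
    · intro x
      by_cases hx : x = 0
      · subst hx
        have hc : Continuous fun x : E => G ‖x‖ - G 0 := by fun_prop
        have ht := hc.tendsto (0:E)
        simp only [norm_zero, sub_self] at ht
        rw [hasFDerivAt_iff_isLittleO]
        have := ((isLittleO_one_iff ℝ).2 ht).smul_isBigO (isBigO_refl (fun x : E => x) (nhds 0))
        simp only [one_smul] at this
        refine (this.congr_right ?_).congr_left ?_
        · intro x; simp
        · intro x; simp [sub_smul]
      · have h1 := ((hGd ‖x‖ (norm_pos_iff.2 hx)).comp_hasFDerivAt x (norm_hasFDerivAt x hx)).smul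
          (hasFDerivAt_id x)
        refine h1.congr_fderiv ?_
        ext1 y
        simp [smul_smul, div_eq_mul_inv]
  rw [show (2 : WithTop ℕ∞) = ((1:ℕ) : WithTop ℕ∞) + 1 by norm_num, contDiff_succ_iff_hasFDerivAt]
  refine ⟨fun x => innerSL ℝ (G ‖x‖ • x), ?_, ?_⟩
  · rw [contDiff_clm_apply_iff]
    intro y
    simp only [innerSL_apply_apply]
    exact ContDiff.inner ℝ (by exact_mod_cast hV) contDiff_const
  · intro x
    by_cases hx : x = 0
    · subst hx
      have h1 := (hu 0)
      rw [hasDerivAt_iff_isLittleO] at h1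
      rw [hasFDerivAt_iff_isLittleO]
      have ht : Tendsto (fun x : E => ‖x‖) (nhds 0) (nhds 0) := by
        simpa using (continuous_norm.tendsto (0:E))
      have := h1.comp_tendsto ht
      have h2 := this.congr_right (g₂ := fun x : E => ‖x‖) (by simp)
      refine (isLittleO_norm_right.1 h2).congr ?_ ?_
      · intro x; simp
      · intro x; simp
    · have h1 := (hu ‖x‖).comp_hasFDerivAt x (norm_hasFDerivAt x hx)
      refine h1.congr_fderiv ?_
      have hx0 : ‖x‖ ≠ 0 := by simpa using hx
      ext y
      simp
      field_simp

/-- Existence for the truncated problem. -/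
lemma trunc_exists (n k : ℕ) (hn : 1 ≤ n) (hk : 1 ≤ k) (c p : ℝ) (hc : 0 < c) (hp : 1 ≤ p)
    (η : ℝ → ℝ) (hη : Continuous η) (hη0 : ∀ t, 0 < η t) (hη1 : ∀ t, η t ≤ 1)
    (hηa : ∀ s t, 0 ≤ s → s ≤ t → η t ≤ η s) :
    ∃ y : ℝ → ℝ, Continuous y ∧ ∀ r, 0 ≤ r → y r = 1 - ∫ t in (0:ℝ)..r,
      t * (c * av n (fun s => (max (η s) (min (y s) 1)) ^ p) t) ^ (1 / (k:ℝ)) := by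
  have hk0 : (0:ℝ) < k := by exact_mod_cast hk
  have hn0 : (0:ℝ) < n := by exact_mod_cast hn
  have hFc : ∀ y : ℝ → ℝ, Continuous y → Continuous fun s => (max (η s) (min (y s) 1)) ^ p := by
    intro y hy
    exact Continuous.rpow_const (by fun_prop) (fun _ => Or.inr (by linarith))
  set a : ℝ → ℝ := fun t => (c * (η t ^ p / n)) ^ (1 / (k:ℝ)) with ha
  have ha0 : ∀ t, 0 < a t := fun t => by
    have := hη0 t
    simp only [ha]; positivity
  have hac : Continuous a := by
    have : Continuous fun t => η t ^ p :=
      hη.rpow_const (fun _ => Or.inr (by linarith))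
    exact Continuous.rpow_const (by fun_prop) (fun _ => Or.inr (by positivity))
  apply volterra_fixed (fun y t => t * (c * av n (fun s => (max (η s) (min (y s) 1)) ^ p) t)
    ^ (1 / (k:ℝ))) (fun t => |t| * (c ^ (1 / (k:ℝ)) + c * p / a t ^ (k - 1)))
  · have : ∀ t, a t ^ (k-1) ≠ 0 := fun t => (pow_pos (ha0 t) _).ne'
    fun_prop (disch := assumption)
  · intro t
    have := ha0 t
    positivity
  · intro y hy
    have := av_continuous n (hFc y hy)
    exact continuous_id.mul (Continuous.rpow_const (by fun_prop) (fun _ => Or.inr (by positivity)))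
  · intro y hy t ht
    rw [abs_mul]
    have hat := ha0 t
    apply mul_le_mul_of_nonneg_left _ (abs_nonneg _)
    have h1 : 0 ≤ c * p / a t ^ (k - 1) := by positivity
    have hl := av_lower n hn (hFc y hy) t 0 ht (fun s _ _ =>
      Real.rpow_nonneg ((hη0 s).le.trans (le_max_left _ _)) _)
    have hu := av_abs_le n (F := fun s => (max (η s) (min (y s) 1)) ^ p) t 1 ht (fun s _ _ => by
      have h0 := (hη0 s).le.trans (le_max_left (η s) (min (y s) 1))
      rw [abs_of_nonneg (Real.rpow_nonneg h0 _)]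
      exact Real.rpow_le_one h0 (max_le (hη1 s) (min_le_right _ _)) (by linarith))
    simp only [zero_div] at hl
    rw [abs_of_nonneg hl] at hu
    rw [abs_of_nonneg (by positivity)]
    have : (c * av n (fun s => (max (η s) (min (y s) 1)) ^ p) t) ^ (1 / (k:ℝ)) ≤ c ^ (1 / (k:ℝ)) := by
      apply Real.rpow_le_rpow (by positivity) _ (by positivity)
      exact mul_le_of_le_one_right hc.le hu
    linarith
  · intro y₁ y₂ hy₁ hy₂ t M ht hM hyM
    have key : ∀ y : ℝ → ℝ, Continuous y → η t ^ p / n ≤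
        av n (fun s => (max (η s) (min (y s) 1)) ^ p) t := fun y hy =>
      av_lower n hn (hFc y hy) t _ ht (fun s hs hst => by
        have := hη0 t
        apply Real.rpow_le_rpow this.le ((hηa s t hs hst).trans (le_max_left _ _)) (by linarith))
    have hd : |av n (fun s => (max (η s) (min (y₁ s) 1)) ^ p) t -
        av n (fun s => (max (η s) (min (y₂ s) 1)) ^ p) t| ≤ p * M := by
      rw [av_sub n (hFc y₁ hy₁) (hFc y₂ hy₂)]
      apply av_abs_le n t _ ht
      intro s hs hst
      refine (rpow_lip p _ _ hp ((hη0 s).le.trans (le_max_left _ _))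
        (max_le (hη1 s) (min_le_right _ _)) ((hη0 s).le.trans (le_max_left _ _))
        (max_le (hη1 s) (min_le_right _ _))).trans ?_
      apply mul_le_mul_of_nonneg_left _ (by linarith)
      refine le_trans ?_ (hyM s hs hst)
      refine (abs_max_sub_max_le_max _ _ _ _).trans ?_
      simp only [sub_self, abs_zero]
      apply max_le (abs_nonneg _)
      refine (abs_min_sub_min_le_max _ _ _ _).trans ?_
      simp
    have k1 := key y₁ hy₁
    have k2 := key y₂ hy₂
    set A₁ := av n (fun s => (max (η s) (min (y₁ s) 1)) ^ p) t
    set A₂ := av n (fun s => (max (η s) (min (y₂ s) 1)) ^ p) t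
    have hηt := hη0 t
    have hb : 0 ≤ η t ^ p / n := by positivity
    have hb1 : 0 ≤ A₁ := hb.trans k1
    have hb2 : 0 ≤ A₂ := hb.trans k2
    have hr := root_lip k hk (a t) ((c * A₁) ^ (1 / (k:ℝ))) ((c * A₂) ^ (1 / (k:ℝ))) (ha0 t).le
      (Real.rpow_le_rpow (by positivity) (by gcongr) (by positivity))
      (Real.rpow_le_rpow (by positivity) (by gcongr) (by positivity))
    rw [one_div, Real.rpow_inv_natCast_pow (by positivity) (by omega),
      Real.rpow_inv_natCast_pow (by positivity) (by omega), ← mul_sub, abs_mul, abs_of_pos hc] at hr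
    have hat := pow_pos (ha0 t) (k-1)
    simp only [one_div]
    rw [← mul_sub, abs_mul, mul_assoc]
    apply mul_le_mul_of_nonneg_left _ (abs_nonneg _)
    have h3 : |(c * A₁) ^ ((k:ℝ)⁻¹) - (c * A₂) ^ ((k:ℝ)⁻¹)| ≤ c * p / a t ^ (k-1) * M := by
      rw [div_mul_eq_mul_div, le_div_iff₀ hat]
      refine hr.trans ?_
      rw [mul_assoc]
      gcongr
    have h4 : 0 ≤ c ^ ((k:ℝ)⁻¹) * M := by positivity
    linarith

/-- Pohozaev-type estimate. -/
lemma pohozaev (n k : ℕ) (c p R : ℝ) (hn : 1 ≤ n) (hk : 1 ≤ k) (hc : 0 < c) (hp : 1 ≤ p)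
    (hcr : ((n:ℝ) + 2) * k < p * ((n:ℝ) - 2 * k))
    (u g G : ℝ → ℝ) (hu : Continuous u) (hg : Continuous g) (hG : Continuous G)
    (hgpos : ∀ r, 0 ≤ r → 0 < g r) (hGpos : ∀ r, 0 ≤ r → 0 < G r)
    (hupos : ∀ r, 0 ≤ r → r ≤ R → 0 < u r)
    (hud : ∀ r, HasDerivAt u (-(r * G r)) r)
    (hgd : ∀ r, 0 < r → r ≤ R → HasDerivAt g ((c * u r ^ p - n * g r) / r) r)
    (hGd : ∀ r, 0 < r → r ≤ R → HasDerivAt G ((1 / (k:ℝ)) * (G r / g r) * ((c * u r ^ p - n * g r) / r)) r)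
    (r : ℝ) (hr : 0 < r) (hrR : r ≤ R) : r ^ 2 * G r ≤ n * u r := by
  have hk0 : (0:ℝ) < k := by exact_mod_cast hk
  have hn0 : (0:ℝ) < n := by exact_mod_cast hn
  set P : ℝ → ℝ := fun r => r ^ n * ((k / (k + 1) : ℝ) * (r ^ 2 * (g r * G r)) +
    c / (p + 1) * u r ^ (p + 1) - n / (p + 1) * (u r * g r)) with hP
  have hPc : Continuous P := by
    have : Continuous fun r => u r ^ (p + 1) :=
      hu.rpow_const (fun _ => Or.inr (by linarith))
    simp only [hP]
    fun_prop
  have hPd : ∀ r, 0 < r → r ≤ R → HasDerivAt P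
      (r ^ (n + 1) * (g r * G r) * ((2 * k - n) / (k + 1) + n / (p + 1))) r := by
    intro r hr hrR
    have hur := hupos r hr.le hrR
    have hgr := hgpos r hr.le
    have h1 : HasDerivAt (fun r => u r ^ (p + 1)) _ r :=
      (hud r).rpow_const (p := p + 1) (Or.inl hur.ne')
    have h2 := ((hasDerivAt_pow 2 r).mul ((hgd r hr hrR).mul (hGd r hr hrR))).const_mul
      (k / (k + 1) : ℝ)
    have h3 := (h2.add (h1.const_mul (c / (p + 1)))).sub
      (((hud r).mul (hgd r hr hrR)).const_mul (n / (p + 1) : ℝ))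
    have h4 := (hasDerivAt_pow n r).mul h3
    refine h4.congr_deriv ?_
    have hX : u r ^ (p + 1) = u r ^ p * u r := Real.rpow_add_one hur.ne' p
    obtain ⟨m, rfl⟩ : ∃ m, n = m + 1 := ⟨n - 1, by omega⟩
    simp only [Pi.mul_apply, Pi.add_apply, Pi.sub_apply, hX, add_sub_cancel_right]
    have hp1 : p + 1 ≠ 0 := by linarith
    have hk1 : (k:ℝ) + 1 ≠ 0 := by positivity
    generalize u r ^ p = X
    generalize u r = U at *
    generalize G r = Γ
    generalize g r = γ at *
    push_cast
    field_simp
    ring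
  have hneg : ((2 * k - n) / (k + 1) + n / (p + 1) : ℝ) ≤ 0 := by
    rw [div_add_div _ _ (by positivity) (by positivity)]
    apply div_nonpos_of_nonpos_of_nonneg _ (by positivity)
    nlinarith
  have hanti : AntitoneOn P (Icc 0 R) := by
    apply antitoneOn_of_deriv_nonpos (convex_Icc 0 R) hPc.continuousOn
    · intro x hx
      rw [interior_Icc] at hx
      exact (hPd x hx.1 hx.2.le).differentiableAt.differentiableWithinAt
    · intro x hx
      rw [interior_Icc] at hx
      rw [(hPd x hx.1 hx.2.le).deriv]
      have := hgpos x hx.1.le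
      have := hGpos x hx.1.le
      have := hx.1
      exact mul_nonpos_of_nonneg_of_nonpos (by positivity) hneg
  have h0 : P r ≤ P 0 := hanti ⟨le_rfl, hr.le.trans hrR⟩ ⟨hr.le, hrR⟩ hr.le
  have h00 : P 0 = 0 := by simp only [hP]; rw [zero_pow (by omega)]; simp
  rw [h00] at h0
  have hur := hupos r hr.le hrR
  have hgr := hgpos r hr.le
  have hGr := hGpos r hr.le
  have h1 := nonpos_of_mul_nonpos_right h0 (by positivity : 0 < r ^ n)
  have h2 : 0 ≤ c / (p + 1) * u r ^ (p + 1) := by positivity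
  have h3 : (k / (k + 1) : ℝ) * (r ^ 2 * G r) ≤ n / (p + 1) * u r := by
    have : (k / (k + 1) : ℝ) * (r ^ 2 * G r) * g r ≤ n / (p + 1) * u r * g r := by linarith
    exact le_of_mul_le_mul_right this hgr
  have h4 : (1/2 : ℝ) ≤ k / (k + 1) := by
    rw [div_le_div_iff₀ (by norm_num) (by positivity)]
    have : (1:ℝ) ≤ k := by exact_mod_cast hk
    linarith
  have h5 : (n / (p + 1) : ℝ) ≤ n / 2 := by gcongr; linarith
  have h6 : 0 ≤ r ^ 2 * G r := by positivity
  nlinarith [mul_le_mul_of_nonneg_right h4 h6, mul_le_mul_of_nonneg_right h5 hur.le]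

lemma exists_profile (n k : ℕ) (c p : ℝ) (hn : 1 ≤ n) (hk : 1 ≤ k) (hc : 0 < c) (hp : 1 ≤ p)
    (hcr : ((n:ℝ) + 2) * k < p * ((n:ℝ) - 2 * k)) :
    ∃ u g G H : ℝ → ℝ, Continuous G ∧ Continuous H ∧ H 0 = 0 ∧
      (∀ r, 0 < r → HasDerivAt G (H r / r) r) ∧ (∀ r, HasDerivAt u (-(r * G r)) r) ∧
      (∀ r, 0 ≤ r → 0 < G r) ∧ (∀ r, 0 ≤ r → G r ^ k = g r) ∧ u 0 = 1 ∧ (∀ r, 0 ≤ r → 0 < u r) ∧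
      (∀ r, 0 < r → HasDerivAt (fun r => r ^ n * g r) (c * r ^ (n - 1) * u r ^ p) r) := by
  have hk0 : (0:ℝ) < k := by exact_mod_cast hk
  have hn0 : (0:ℝ) < n := by exact_mod_cast hn
  set A : ℝ := c ^ (1 / (k:ℝ)) with hA
  have hA0 : 0 < A := by positivity
  set η : ℝ → ℝ := fun r => (1/4) / (1 + (1 + A) * |r|) ^ (2 * n) with hη
  have hb : ∀ r : ℝ, 1 ≤ 1 + (1 + A) * |r| := fun r => by
    have : 0 ≤ (1 + A) * |r| := by positivity
    linarith
  have hη0 : ∀ r, 0 < η r := fun r => by simp only [hη]; positivity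
  have hη4 : ∀ r, η r ≤ 1/4 := fun r => div_le_self (by norm_num) (one_le_pow₀ (hb r))
  have hηc : Continuous η := by
    have : ∀ r : ℝ, (1 + (1 + A) * |r|) ^ (2 * n) ≠ 0 := fun r => by positivity
    simp only [hη]
    fun_prop (disch := assumption)
  have hηa : ∀ s t, 0 ≤ s → s ≤ t → η t ≤ η s := by
    intro s t hs hst
    have ht := hs.trans hst
    simp only [hη, abs_of_nonneg hs, abs_of_nonneg ht]
    gcongr
  obtain ⟨y, hyc, hy⟩ := trunc_exists n k hn hk c p hc hp η hηc hη0
    (fun t => (hη4 t).trans (by norm_num)) hηa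
  set F : ℝ → ℝ := fun s => (max (η s) (min (y s) 1)) ^ p with hF
  have hFc : Continuous F := Continuous.rpow_const (by fun_prop) (fun _ => Or.inr (by linarith))
  set g : ℝ → ℝ := fun t => c * av n F t with hg
  have hgc : Continuous g := by
    have := av_continuous n hFc
    fun_prop
  set G : ℝ → ℝ := fun t => g t ^ (1 / (k:ℝ)) with hG
  have hGc : Continuous G := hgc.rpow_const (fun _ => Or.inr (by positivity))
  set u : ℝ → ℝ := fun r => 1 - ∫ t in (0:ℝ)..r, t * G t with hu
  have hGc' : Continuous fun t => t * G t := by fun_prop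
  have hud : ∀ r, HasDerivAt u (-(r * G r)) r := fun r => by
    have := intervalIntegral.integral_hasDerivAt_right (hGc'.intervalIntegrable 0 r)
      hGc'.stronglyMeasurable.stronglyMeasurableAtFilter hGc'.continuousAt
    exact this.const_sub 1
  have huc : Continuous u := continuous_iff_continuousAt.2 fun r => (hud r).continuousAt
  have hyu : ∀ r, 0 ≤ r → y r = u r := fun r hr => hy r hr
  have hgpos : ∀ t, 0 ≤ t → 0 < g t := fun t ht => by
    have h1 := av_lower n hn hFc t (η t ^ p) ht (fun s hs hst => by
        have := hη0 t
        apply Real.rpow_le_rpow this.le ((hηa s t hs hst).trans (le_max_left _ _)) (by linarith))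
    have := hη0 t
    have h2 : 0 < η t ^ p / n := by positivity
    exact mul_pos hc (h2.trans_le h1)
  have hGpos : ∀ t, 0 ≤ t → 0 < G t := fun t ht => Real.rpow_pos_of_pos (hgpos t ht) _
  have hGA : ∀ t, 0 ≤ t → G t ≤ A := fun t ht => by
    apply Real.rpow_le_rpow (hgpos t ht).le _ (by positivity)
    have := av_abs_le n (F := F) t 1 ht (fun s _ _ => by
      have h0 := (hη0 s).le.trans (le_max_left (η s) (min (y s) 1))
      rw [hF, abs_of_nonneg (Real.rpow_nonneg h0 _)]
      exact Real.rpow_le_one h0 (max_le ((hη4 s).trans (by norm_num)) (min_le_right _ _))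
        (by linarith))
    exact mul_le_of_le_one_right hc.le ((le_abs_self _).trans this)
  have hu0 : u 0 = 1 := by simp [hu]
  have huanti : AntitoneOn u (Ici 0) := by
    apply antitoneOn_of_deriv_nonpos (convex_Ici 0) huc.continuousOn
      (fun x _ => (hud x).differentiableAt.differentiableWithinAt)
    intro x hx
    rw [interior_Ici] at hx
    have hx : 0 < x := hx
    rw [(hud x).deriv]
    have := hGpos x hx.le
    have : 0 < x * G x := by positivity
    linarith
  have hu1 : ∀ r, 0 ≤ r → u r ≤ 1 := fun r hr => by
    rw [← hu0]; exact huanti (mem_Ici.2 le_rfl) hr hr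
  have hgd : ∀ r, 0 < r → HasDerivAt g ((c * F r - n * g r) / r) r := fun r hr => by
    refine ((av_hasDerivAt n hn hFc r hr).const_mul c).congr_deriv ?_
    simp only [hg]; ring
  have hGd : ∀ r, 0 < r → HasDerivAt G
      ((1 / (k:ℝ)) * (G r / g r) * ((c * F r - n * g r) / r)) r := fun r hr => by
    have hgr := hgpos r hr.le
    refine ((hgd r hr).rpow_const (p := 1 / (k:ℝ)) (Or.inl hgr.ne')).congr_deriv ?_
    rw [Real.rpow_sub_one hgr.ne']
    simp only [hG]; ring
  have hFu : ∀ r, 0 ≤ r → η r ≤ u r → F r = u r ^ p := fun r hr h => by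
    simp only [hF, hyu r hr]
    rw [min_eq_left (hu1 r hr), max_eq_right h]
  -- lower bound near zero
  have hnear : ∀ r, 0 ≤ r → (1 + A) * r ≤ 1 → 3/4 ≤ u r := fun r hr hrA => by
    have h1 := intervalIntegral.norm_integral_le_of_norm_le_const (a := (0:ℝ)) (b := r)
      (f := fun t => t * G t) (C := r * A) (by
        intro t ht
        rw [uIoc_of_le hr] at ht
        have := hGpos t ht.1.le
        have := ht.1
        rw [Real.norm_eq_abs, abs_of_nonneg (by positivity)]
        exact mul_le_mul ht.2 (hGA t ht.1.le) (by positivity) hr)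
    rw [sub_zero, abs_of_nonneg hr] at h1
    have h2 := (le_abs_self _).trans h1
    have h3 : r * A * r ≤ 1/4 := by
      nlinarith [sq_nonneg (r - A * r), mul_nonneg hA0.le hr, mul_nonneg hr hr]
    simp only [hu]
    linarith
  have hmain : ∀ r, 0 ≤ r → η r < u r := by
    by_contra hcon
    push Not at hcon
    set Z : Set ℝ := Ici 0 ∩ {r | u r ≤ η r} with hZ
    have hZc : IsClosed Z := isClosed_Ici.inter (isClosed_le huc hηc)
    have hZn : Z.Nonempty := by
      obtain ⟨r, h1, h2⟩ := hcon
      exact ⟨r, h1, h2⟩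
    have hZb : BddBelow Z := ⟨0, fun r hr => hr.1⟩
    set R := sInf Z with hR
    have hRZ : R ∈ Z := hZc.csInf_mem hZn hZb
    have hR0 : 0 ≤ R := hRZ.1
    have hlt : ∀ r, 0 ≤ r → r < R → η r < u r := fun r hr hrR => by
      by_contra h
      exact absurd (csInf_le hZb (show r ∈ Z from ⟨hr, not_lt.1 h⟩)) (not_le.2 hrR)
    have hRb : 1 < (1 + A) * R := by
      by_contra h
      have h1 := hnear R hR0 (not_lt.1 h)
      have h2 : u R ≤ η R := hRZ.2
      linarith [hη4 R]
    have hRpos : 0 < R := by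
      rcases hR0.eq_or_lt with h | h
      · rw [← h] at hRb; norm_num at hRb
      · exact h
    have hle : ∀ r, 0 ≤ r → r ≤ R → η r ≤ u r := by
      have : Icc 0 R ⊆ {r | η r ≤ u r} := by
        rw [← closure_Ico hRpos.ne]
        apply closure_minimal _ (isClosed_le hηc huc)
        intro r hr
        exact (hlt r hr.1 hr.2).le
      exact fun r h1 h2 => this ⟨h1, h2⟩
    have hupos : ∀ r, 0 ≤ r → r ≤ R → 0 < u r := fun r h1 h2 => (hη0 r).trans_le (hle r h1 h2)
    have hpoh := pohozaev n k c p R hn hk hc hp hcr u g G huc hgc hGc hgpos hGpos hupos hud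
      (fun r h1 h2 => by rw [← hFu r h1.le (hle r h1.le h2)]; exact hgd r h1)
      (fun r h1 h2 => by rw [← hFu r h1.le (hle r h1.le h2)]; exact hGd r h1)
    set r₀ : ℝ := 1 / (1 + A) with hr₀
    have hr₀p : 0 < r₀ := by positivity
    have hr₀R : r₀ < R := by
      rw [hr₀, div_lt_iff₀ (by positivity)]; linarith
    have hmono : MonotoneOn (fun r => u r * (1 + (1 + A) * r) ^ (2 * n)) (Icc r₀ R) := by
      have hd : ∀ r, HasDerivAt (fun r => u r * (1 + (1 + A) * r) ^ (2 * n))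
          (-(r * G r) * (1 + (1 + A) * r) ^ (2 * n) +
            u r * ((2 * n : ℕ) * (1 + (1 + A) * r) ^ (2 * n - 1) * (1 + A))) r := fun r => by
        have h1 : HasDerivAt (fun r : ℝ => 1 + (1 + A) * r) (1 + A) r := by
          simpa using ((hasDerivAt_id r).const_mul (1 + A)).const_add 1
        exact (hud r).mul (h1.pow (2 * n))
      apply monotoneOn_of_deriv_nonneg (convex_Icc _ _)
      · exact fun r _ => (hd r).continuousAt.continuousWithinAt
      · exact fun r _ => (hd r).differentiableAt.differentiableWithinAt
      · intro r hr
        rw [interior_Icc] at hr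
        rw [(hd r).deriv]
        have hrp : 0 < r := hr₀p.trans hr.1
        have h1 := hpoh r hrp hr.2.le
        have h2 : 1 ≤ (1 + A) * r := by
          have := hr.1
          rw [hr₀, div_lt_iff₀ (by positivity)] at this
          linarith
        obtain ⟨m, hm⟩ : ∃ m, 2 * n = m + 1 := ⟨2 * n - 1, by omega⟩
        have hm' : (2 * n : ℝ) = ((m + 1 : ℕ) : ℝ) := by exact_mod_cast hm
        rw [hm, ← hm', Nat.add_sub_cancel, pow_succ]
        have hGr := hGpos r hrp.le
        have hur := hupos r hrp.le hr.2.le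
        have h3 : r * G r * (1 + (1 + A) * r) ≤ u r * (2 * n * (1 + A)) := by
          have : r * G r * (1 + (1 + A) * r) ≤ r * G r * (2 * ((1 + A) * r)) := by
            apply mul_le_mul_of_nonneg_left _ (by positivity); linarith
          have h4 : r * G r * (2 * ((1 + A) * r)) = 2 * (1 + A) * (r ^ 2 * G r) := by ring
          have h5 := mul_le_mul_of_nonneg_left h1 (by positivity : 0 ≤ 2 * (1 + A))
          linarith
        have h6 := mul_le_mul_of_nonneg_left h3 (by positivity : 0 ≤ (1 + (1 + A) * r) ^ m)
        linarith
    have h1 := hmono ⟨le_rfl, hr₀R.le⟩ ⟨hr₀R.le, le_rfl⟩ hr₀R.le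
    have h2 : 3/4 ≤ u r₀ := hnear r₀ hr₀p.le (by rw [hr₀]; field_simp; rfl)
    have h3 : u R ≤ η R := hRZ.2
    simp only [hη, abs_of_nonneg hR0] at h3
    rw [le_div_iff₀ (by positivity)] at h3
    have h4 : (1:ℝ) ≤ (1 + (1 + A) * r₀) ^ (2 * n) := one_le_pow₀ (by
      have : 0 ≤ (1 + A) * r₀ := by positivity
      linarith)
    simp only at h1
    nlinarith
  refine ⟨u, g, G, fun r => (1 / (k:ℝ)) * (G |r| / g |r|) * (c * F |r| - n * g |r|), hGc, ?_, ?_,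
    ?_, hud, hGpos, ?_, hu0, fun r hr => (hη0 r).trans (hmain r hr), ?_⟩
  · have : ∀ r : ℝ, g |r| ≠ 0 := fun r => (hgpos _ (abs_nonneg r)).ne'
    fun_prop (disch := assumption)
  · have := av_zero n hn F
    simp only [abs_zero, hg]
    rw [show c * F 0 - n * (c * av n F 0) = c * (F 0 - n * av n F 0) by ring, this]
    simp
  · intro r hr
    refine (hGd r hr).congr_deriv ?_
    simp only [abs_of_pos hr]; ring
  · intro r hr
    simp only [hG, one_div]
    exact Real.rpow_inv_natCast_pow (hgpos r hr).le (by omega)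
  · intro r hr
    have h1 := (av_mul_hasDerivAt n hn hFc r).const_mul c
    rw [hFu r hr.le (hmain r hr.le).le] at h1
    have e : (fun r => r ^ n * g r) = fun y => c * (y ^ n * av n F y) := by
      ext r; simp only [hg]; ring
    rw [e]
    refine h1.congr_deriv ?_
    ring

/-- existence of an entire regular solution with `u(0) = 1` when `p > p_so`. -/
theorem exists_entire_regular_solution (n k : ℕ) (p : ℝ)
    (hn : 3 ≤ n) (hk1 : 1 < k) (hk2 : 2 * k < n)
    (hp : ((n : ℝ) + 2) * k / ((n : ℝ) - 2 * k) < p) :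
    ∃ u : ℝ → ℝ, IsRegularSolution n k p 1 u := by
  have hk0 : (1:ℝ) < k := by exact_mod_cast hk1
  have hnk : (0:ℝ) < (n:ℝ) - 2 * k := by
    have : ((2 * k : ℕ) : ℝ) < n := by exact_mod_cast hk2
    push_cast at this
    linarith
  have hB : 0 < binomC n k := by
    unfold binomC
    exact_mod_cast Nat.choose_pos (by omega)
  have hcr := (div_lt_iff₀ hnk).1 hp
  have hp1 : 1 ≤ p := by
    by_contra h
    nlinarith
  obtain ⟨u, g, G, H, hGc, hHc, hH0, hGd, hud, hGpos, hGk, hu0, hupos, hW⟩ :=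
    exists_profile n k (k / binomC n k) p (by omega) (by omega) (by positivity) hp1 hcr
  have hder : deriv u = fun r => -(r * G r) := funext fun r => (hud r).deriv
  have hC1 : ContDiff ℝ 1 u := by
    rw [contDiff_one_iff_deriv, hder]
    exact ⟨fun r => (hud r).differentiableAt, by fun_prop⟩
  refine ⟨u, hC1.contDiffOn, ?_, hu0, hupos, ?_, ?_⟩
  · have := (hud 0).hasDerivWithinAt.derivWithin (uniqueDiffOn_Ici (0:ℝ) 0 (mem_Ici.2 le_rfl))
    simpa using this
  · intro r hr
    have h1 := (hW r hr).neg
    have h2 : flux n k u =ᶠ[nhds r] -(fun r => r ^ n * g r) := by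
      filter_upwards [lt_mem_nhds hr] with s hs
      have hs' := hGpos s hs.le
      simp only [flux, hder, Pi.neg_apply, ← hGk s hs.le, abs_neg, abs_of_pos (mul_pos hs hs')]
      obtain ⟨m, rfl⟩ : ∃ m, k = m + 1 := ⟨k - 1, by omega⟩
      obtain ⟨l, rfl⟩ : ∃ l, n = l + (m + 1) := ⟨n - (m + 1), by omega⟩
      simp only [Nat.add_sub_cancel, pow_add, mul_pow]
      ring
    refine (h1.congr_of_eventuallyEq h2).congr_deriv ?_
    ring
  · apply radial_contDiff n (fun r => -u r) G H hGc hHc hH0 hGd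
    intro r
    exact (hud r).neg.congr_deriv (neg_neg _)

end KHessianPaper
end
end

section
/- Let n ≥ 3, k an integer with 1 < k < n/2, and p > nk/(n-2k). Let u be a regular solution of the initial value problem -(1/k)·C(n-1,k-1)·(r^{n-k}|u'|^{k-1}u')' = r^{n-1}u^p, u > 0, u'(0) = 0, u(0) = ρ > 0, and suppose u(r)/u_s(r) → 1 as r → ∞, where u_s(r) = A·r^{-2k/(p-k)} with A = ((1/k)·C(n-1,k-1))^{1/(p-k)}·(2k/(p-k))^{k/(p-k)}·(n − 2pk/(p-k))^{1/(p-k)}. Then u'(r)/u_s'(r) → 1 as r → ∞. -/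
open MeasureTheory Real Set Filter Asymptotics

noncomputable section

namespace KHessianPaper

theorem lhop_aux (G g : ℝ → ℝ) (m L : ℝ) (hm : 0 < m)
    (hG : ∀ r, 0 < r → HasDerivAt G (g r) r)
    (hg : Tendsto (fun r => g r / r ^ (m - 1)) atTop (nhds L)) :
    Tendsto (fun r => G r / r ^ m) atTop (nhds (L / m)) := by
  rw [Metric.tendsto_atTop]
  intro ε hε
  rw [Metric.tendsto_atTop] at hg
  obtain ⟨N, hN⟩ := hg (ε / 4 * m) (by positivity)
  set R := max N 1 with hR
  have hR1 : 1 ≤ R := le_max_right _ _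
  set H : ℝ → ℝ := fun r => G r - L / m * r ^ m with hH
  have hd : ∀ r, 0 < r → HasDerivAt (fun r : ℝ => r ^ m) (m * r ^ (m - 1)) r := fun r hr =>
    Real.hasDerivAt_rpow_const (Or.inl hr.ne')
  have hHd : ∀ r, 0 < r → HasDerivAt H (g r - L / m * (m * r ^ (m - 1))) r := fun r hr =>
    (hG r hr).sub ((hd r hr).const_mul _)
  have key : ∀ x, R ≤ x → ‖H x‖ ≤ ‖H R‖ + ε / 4 * (x ^ m - R ^ m) := by
    intro x hx
    refine image_norm_le_of_norm_deriv_right_le_deriv_boundary' (f := H) (a := R) (b := x)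
      (f' := fun r => g r - L / m * (m * r ^ (m - 1)))
      (B := fun x => ‖H R‖ + ε / 4 * (x ^ m - R ^ m))
      (B' := fun r => ε / 4 * (m * r ^ (m - 1))) ?_ ?_ ?_ ?_ ?_ ?_ ⟨hx, le_rfl⟩
    · intro y hy
      exact (hHd y (by linarith [hy.1])).continuousAt.continuousWithinAt
    · intro y hy
      exact (hHd y (by linarith [hy.1])).hasDerivWithinAt
    · simp
    · intro y hy
      have := (((hd y (by linarith [hy.1])).sub_const (R ^ m)).const_mul (ε / 4)).const_add ‖H R‖
      exact this.continuousAt.continuousWithinAt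
    · intro y hy
      have := (((hd y (by linarith [hy.1])).sub_const (R ^ m)).const_mul (ε / 4)).const_add ‖H R‖
      exact this.hasDerivWithinAt
    · intro y hy
      have hy0 : 0 < y := by linarith [hy.1]
      have h1 := hN y (le_trans (le_max_left _ _) hy.1)
      rw [Real.dist_eq] at h1
      have hp : 0 < y ^ (m - 1) := Real.rpow_pos_of_pos hy0 _
      have e : g y - L / m * (m * y ^ (m - 1)) = (g y / y ^ (m - 1) - L) * y ^ (m - 1) := by
        field_simp
      rw [e, norm_mul, Real.norm_eq_abs, Real.norm_eq_abs, abs_of_pos hp]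
      nlinarith
  have ht := (tendsto_rpow_atTop hm).eventually_ge_atTop (‖H R‖ / (ε / 4))
  obtain ⟨M, hM⟩ := eventually_atTop.1 ht
  refine ⟨max M R, fun x hx => ?_⟩
  have hxM := hM x (le_trans (le_max_left _ _) hx)
  have hxR : R ≤ x := le_trans (le_max_right _ _) hx
  have hx0 : 0 < x := by linarith
  have hxm : 0 < x ^ m := Real.rpow_pos_of_pos hx0 _
  have hRm : 0 < R ^ m := Real.rpow_pos_of_pos (by linarith) _
  have hk := key x hxR
  rw [div_le_iff₀ (by positivity)] at hxM
  rw [Real.dist_eq]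
  have e : G x / x ^ m - L / m = H x / x ^ m := by
    simp only [hH]; field_simp
  rw [e, abs_div, abs_of_pos hxm, div_lt_iff₀ hxm, ← Real.norm_eq_abs]
  nlinarith [mul_pos hε hRm, mul_pos hε hxm]

/-- if `u/u_s → 1` at infinity, then `u'/u_s' → 1` at infinity, where
`u_s'(r) = -A (2k/(p-k)) r^{-(p+k)/(p-k)}`. -/
theorem deriv_ratio_tendsto_one (n k : ℕ) (p ρ : ℝ) (u : ℝ → ℝ)
    (hn : 3 ≤ n) (hk1 : 1 < k) (hk2 : 2 * k < n) (hρ : 0 < ρ)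
    (hp : (n : ℝ) * k / ((n : ℝ) - 2 * k) < p)
    (hu : IsRegularSolution n k p ρ u)
    (hlim : Tendsto (fun r : ℝ => u r / uSing n k p r) atTop (nhds 1)) :
    Tendsto (fun r : ℝ => deriv u r /
        (-(Aconst n k p * (2 * (k : ℝ) / (p - k))) * r ^ (-((p + (k : ℝ)) / (p - k)))))
      atTop (nhds 1) := by
  have hkR : (1 : ℝ) < k := by exact_mod_cast hk1
  have hk0 : (0 : ℝ) < k := by linarith
  have hnk : (0 : ℝ) < (n : ℝ) - 2 * k := by
    have : ((2 * k : ℕ) : ℝ) < n := by exact_mod_cast hk2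
    push_cast at this; linarith
  rw [div_lt_iff₀ hnk] at hp
  have hpk : 0 < p - k := by
    by_contra h
    nlinarith
  have hc : 0 < binomC n k := by
    unfold binomC
    exact_mod_cast Nat.choose_pos (by omega)
  set c := binomC n k with hcdef
  set α : ℝ := 2 * (k : ℝ) / (p - k) with hα
  have hα0 : 0 < α := by positivity
  have hαe : α * (p - k) = 2 * k := by rw [hα]; field_simp
  set m : ℝ := (n : ℝ) - 2 * p * k / (p - k) with hmdef
  have hmα : m = n - α * p := by rw [hmdef, hα]; ring
  have hm : 0 < m := by
    rw [hmdef, sub_pos, div_lt_iff₀ hpk]; nlinarith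
  set A := Aconst n k p with hA
  have hAe : A = ((1 / (k : ℝ)) * c) ^ (1 / (p - k)) * α ^ ((k : ℝ) / (p - k))
      * m ^ (1 / (p - k)) := rfl
  have hA0 : 0 < A := by rw [hAe]; positivity
  have hApk : A ^ (p - k) = (1 / (k : ℝ)) * c * α ^ k * m := by
    rw [hAe, Real.mul_rpow (by positivity) (by positivity),
      Real.mul_rpow (by positivity) (by positivity), ← Real.rpow_mul (by positivity),
      ← Real.rpow_mul (by positivity), ← Real.rpow_mul (by positivity),
      div_mul_cancel₀ _ hpk.ne', div_mul_cancel₀ _ hpk.ne', Real.rpow_one, Real.rpow_one,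
      Real.rpow_natCast]
  have hAp : A ^ p = (1 / (k : ℝ)) * c * α ^ k * m * A ^ k := by
    rw [← hApk, ← Real.rpow_natCast A k, ← Real.rpow_add hA0]; congr 1; ring
  have hexp : (p + (k : ℝ)) / (p - k) = α + 1 := by rw [hα]; field_simp; ring
  rw [hexp]
  -- limit of the flux
  have h1 : Tendsto (fun r => -flux n k u r / r ^ m) atTop (nhds (((k : ℝ) / c * A ^ p) / m)) := by
    refine lhop_aux (fun r => -flux n k u r) _ m _ hm (fun r hr => (hu.eqn r hr).neg) ?_
    have h2 : Tendsto (fun r => (k : ℝ) / c * A ^ p * (u r / uSing n k p r) ^ p) atTop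
        (nhds ((k : ℝ) / c * A ^ p * 1 ^ p)) :=
      (hlim.rpow_const (Or.inl one_ne_zero)).const_mul _
    rw [Real.one_rpow, mul_one] at h2
    refine h2.congr' ?_
    filter_upwards [eventually_gt_atTop 0] with r hr
    have hur := hu.pos r hr.le
    have e1 : uSing n k p r = A * r ^ (-α) := rfl
    rw [e1, Real.div_rpow hur.le (by positivity), Real.mul_rpow hA0.le (by positivity),
      ← Real.rpow_mul hr.le]
    have e2 : r ^ (m - 1) = r ^ (n - 1) * r ^ (-α * p) := by
      rw [← Real.rpow_natCast r (n - 1), ← Real.rpow_add hr]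
      congr 1
      rw [hmα, Nat.cast_sub (by omega)]; push_cast; ring
    rw [e2]
    have := Real.rpow_pos_of_pos hA0 p
    have := Real.rpow_pos_of_pos hr (-α * p)
    rw [← hcdef]
    field_simp
  set B : ℝ := A * α with hB
  have hB0 : 0 < B := by positivity
  have hlimv : ((k : ℝ) / c * A ^ p) / m = B ^ k := by
    rw [hAp, hB, mul_pow]; field_simp
  rw [hlimv] at h1
  have hBk : 0 < B ^ k := by positivity
  have hpos := h1.eventually_const_lt hBk
  have h3 : Tendsto (fun r => ((-flux n k u r / r ^ m) / B ^ k) ^ ((k : ℝ)⁻¹)) atTop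
      (nhds ((B ^ k / B ^ k) ^ ((k : ℝ)⁻¹))) :=
    (h1.div_const _).rpow_const (Or.inr (by positivity))
  rw [div_self hBk.ne', Real.one_rpow] at h3
  refine h3.congr' ?_
  filter_upwards [hpos, eventually_gt_atTop 0] with r hr1 hr
  have hrm : 0 < r ^ m := Real.rpow_pos_of_pos hr _
  have hneg : deriv u r < 0 := by
    by_contra h
    push Not at h
    have : 0 ≤ flux n k u r := by unfold flux; positivity
    have := (div_pos_iff_of_pos_right hrm).1 hr1
    linarith
  have hD : 0 < r ^ (-(α + 1)) := Real.rpow_pos_of_pos hr _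
  have hfl : -flux n k u r = r ^ (n - k) * (-deriv u r) ^ k := by
    unfold flux
    rw [abs_of_neg hneg]
    obtain ⟨j, rfl⟩ : ∃ j, k = j + 1 := ⟨k - 1, by omega⟩
    rw [Nat.add_sub_cancel, pow_succ (-deriv u r) j]; ring
  have hrr : r ^ m = r ^ (n - k) * (r ^ (-(α + 1))) ^ k := by
    rw [← Real.rpow_natCast r (n - k), ← Real.rpow_natCast _ k, ← Real.rpow_mul hr.le,
      ← Real.rpow_add hr]
    congr 1
    rw [hmα, Nat.cast_sub (by omega)]; linarith
  have : (-flux n k u r / r ^ m) / B ^ k = (deriv u r / (-B * r ^ (-(α + 1)))) ^ k := by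
    rw [hfl, hrr]
    have : deriv u r / (-B * r ^ (-(α + 1))) = (-deriv u r) / (B * r ^ (-(α + 1))) := by
      rw [neg_mul, div_neg, neg_div]
    rw [this, div_pow, mul_pow B (r ^ _), div_div, mul_assoc, mul_div_mul_left _ _ (by positivity),
      mul_comm (B ^ k)]
  rw [this]
  refine Real.pow_rpow_inv_natCast ?_ (by omega)
  rw [neg_mul, div_neg, ← neg_div]
  exact div_nonneg (by linarith) (by positivity)

end KHessianPaper
end
end
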